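/- Let n > 2 and let Γ ⊂ ℂⁿ be an irreducible algebraic curve having at least one singular point. Then there exists an algebraic curve Λ ⊂ ℂⁿ such that Λ and Γ are topologically equivalent — i.e., there is a homeomorphism Φ : ℂⁿ → ℂⁿ with Φ(Λ) = Γ — but Λ and Γ are not bi-Lipschitz equivalent. -/

import Mathlib

open Set Metric

noncomputable section

/-- An algebraic set in ℂᵏ: the common zero set of a finite family of polynomials. -/
def IsAlgebraicSet {k : ℕ} (X : Set (EuclideanSpace ℂ (Fin k))) : Prop :=
  ∃ S : Finset (MvPolynomial (Fin k) ℂ),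
    X = {x | ∀ p ∈ S, MvPolynomial.eval (fun i => x i) p = 0}

/-- An irreducible algebraic curve: an infinite algebraic set all of whose proper algebraic
subsets are finite. -/
def IsIrreducibleAlgebraicCurve {k : ℕ} (X : Set (EuclideanSpace ℂ (Fin k))) : Prop :=
  IsAlgebraicSet X ∧ X.Infinite ∧ ∀ Y, IsAlgebraicSet Y → Y ⊂ X → Y.Finite

/-- An algebraic curve: a finite union of irreducible algebraic curves. -/
def IsAlgebraicCurve {k : ℕ} (X : Set (EuclideanSpace ℂ (Fin k))) : Prop :=
  ∃ F : Finset (Set (EuclideanSpace ℂ (Fin k))),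
    (∀ C ∈ F, IsIrreducibleAlgebraicCurve C) ∧ X = ⋃ C ∈ F, C

/-- `f` maps `X` bijectively onto `Y` and is bi-Lipschitz (outer metric). -/
def IsBiLipschitzOn {E F : Type*} [NormedAddCommGroup E] [NormedAddCommGroup F]
    (f : E → F) (X : Set E) (Y : Set F) : Prop :=
  Set.BijOn f X Y ∧ ∃ C : ℝ, 1 ≤ C ∧ ∀ x ∈ X, ∀ x' ∈ X,
    C⁻¹ * ‖x - x'‖ ≤ ‖f x - f x'‖ ∧ ‖f x - f x'‖ ≤ C * ‖x - x'‖

/-- `X` and `Y` are bi-Lipschitz equivalent (with respect to the outer Euclidean metric). -/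
def BiLipschitzEquiv {E F : Type*} [NormedAddCommGroup E] [NormedAddCommGroup F]
    (X : Set E) (Y : Set F) : Prop :=
  ∃ f : E → F, IsBiLipschitzOn f X Y

/-- `X` and `Y` are bi-Lipschitz equivalent at infinity. -/
def BiLipschitzEquivAtInfinity {E F : Type*} [NormedAddCommGroup E] [NormedAddCommGroup F]
    (X : Set E) (Y : Set F) : Prop :=
  ∃ (K₁ : Set E) (K₂ : Set F), IsCompact K₁ ∧ IsCompact K₂ ∧
    BiLipschitzEquiv (X \ K₁) (Y \ K₂)

/-- The germs `(X, p)` and `(Y, q)` are bi-Lipschitz equivalent. -/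
def GermBiLipschitzEquiv {E F : Type*} [NormedAddCommGroup E] [NormedAddCommGroup F]
    (X : Set E) (p : E) (Y : Set F) (q : F) : Prop :=
  ∃ (U : Set E) (V : Set F), IsOpen U ∧ IsOpen V ∧ p ∈ U ∧ q ∈ V ∧
    ∃ f : E → F, IsBiLipschitzOn f (X ∩ U) (Y ∩ V) ∧ f p = q

/-- `γ` maps `D` homeomorphically onto `S`. -/
def MapsHomeomorphicallyOnto {E : Type*} [TopologicalSpace E]
    (γ : ℂ → E) (D : Set ℂ) (S : Set E) : Prop :=
  Set.InjOn γ D ∧ γ '' D = S ∧ ContinuousOn γ D ∧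
    ∃ σ : E → ℂ, ContinuousOn σ S ∧ ∀ z ∈ D, σ (γ z) = z

/-- A regular point of a curve `X ⊂ ℂᵏ`: some neighborhood of `p` in `X` is the
homeomorphic image of an injective holomorphic map with nowhere-vanishing derivative. -/
def IsRegularPoint {k : ℕ} (X : Set (EuclideanSpace ℂ (Fin k)))
    (p : EuclideanSpace ℂ (Fin k)) : Prop :=
  ∃ (U : Set (EuclideanSpace ℂ (Fin k))) (D : Set ℂ) (γ : ℂ → EuclideanSpace ℂ (Fin k)),
    IsOpen U ∧ p ∈ U ∧ IsOpen D ∧ DifferentiableOn ℂ γ D ∧ Set.InjOn γ D ∧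
    (∀ z ∈ D, deriv γ z ≠ 0) ∧ MapsHomeomorphicallyOnto γ D (X ∩ U)

/-- The set of singular points of `X`. -/
def SingularSet {k : ℕ} (X : Set (EuclideanSpace ℂ (Fin k))) :
    Set (EuclideanSpace ℂ (Fin k)) :=
  {p ∈ X | ¬ IsRegularPoint X p}

/-- `B` is a (smooth) branch through `q` with tangent vector `v`. -/
def IsBranchAt (B : Set (EuclideanSpace ℂ (Fin 2))) (q v : EuclideanSpace ℂ (Fin 2)) : Prop :=
  ∃ (D : Set ℂ) (γ : ℂ → EuclideanSpace ℂ (Fin 2)) (z₀ : ℂ),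
    IsOpen D ∧ z₀ ∈ D ∧ DifferentiableOn ℂ γ D ∧ Set.InjOn γ D ∧
    (∀ z ∈ D, deriv γ z ≠ 0) ∧ MapsHomeomorphicallyOnto γ D B ∧
    γ z₀ = q ∧ deriv γ z₀ = v

/-- `q` is a node of the plane curve `Y`: near `q`, `Y` is the union of two smooth branches
meeting only at `q` with distinct tangent lines. -/
def IsNode (Y : Set (EuclideanSpace ℂ (Fin 2))) (q : EuclideanSpace ℂ (Fin 2)) : Prop :=
  q ∈ Y ∧ ∃ (U B₁ B₂ : Set (EuclideanSpace ℂ (Fin 2))) (v₁ v₂ : EuclideanSpace ℂ (Fin 2)),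
    IsOpen U ∧ q ∈ U ∧ Y ∩ U = B₁ ∪ B₂ ∧ B₁ ∩ B₂ = {q} ∧
    IsBranchAt B₁ q v₁ ∧ IsBranchAt B₂ q v₂ ∧ ∀ c : ℂ, v₂ ≠ c • v₁

/-- The set of points of `ℂ²` having more than one `π`-preimage in `X`. -/
def MultipleSet {n : ℕ} (π : EuclideanSpace ℂ (Fin n) →ₗ[ℂ] EuclideanSpace ℂ (Fin 2))
    (X : Set (EuclideanSpace ℂ (Fin n))) : Set (EuclideanSpace ℂ (Fin 2)) :=
  {q | ∃ x ∈ X, ∃ y ∈ X, x ≠ y ∧ π x = q ∧ π y = q}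

/-- `π` is a generic plane projection for the algebraic curve `X ⊂ ℂⁿ`. -/
def IsGenericPlaneProjection {n : ℕ}
    (π : EuclideanSpace ℂ (Fin n) →ₗ[ℂ] EuclideanSpace ℂ (Fin 2))
    (X : Set (EuclideanSpace ℂ (Fin n))) : Prop :=
  Function.Surjective π ∧
  (∀ K : Set (EuclideanSpace ℂ (Fin 2)), IsCompact K → IsCompact (X ∩ ⇑π ⁻¹' K)) ∧
  (MultipleSet π X).Finite ∧
  (∀ q ∈ MultipleSet π X, ∃ x y, x ≠ y ∧ {z ∈ X | π z = q} = {x, y} ∧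
    IsRegularPoint X x ∧ IsRegularPoint X y) ∧
  (∀ q ∈ MultipleSet π X, IsNode (⇑π '' X) q) ∧
  (∀ p ∈ X, π p ∉ MultipleSet π X →
    ∃ (U : Set (EuclideanSpace ℂ (Fin n))) (V : Set (EuclideanSpace ℂ (Fin 2))),
      IsOpen U ∧ IsOpen V ∧ p ∈ U ∧ π p ∈ V ∧
      IsBiLipschitzOn (⇑π) (X ∩ U) ((⇑π '' X) ∩ V))

/-- The complex projective plane `ℂP²`. -/
abbrev ProjPlane : Type := Projectivization ℂ (Fin 3 → ℂ)

instance : TopologicalSpace ProjPlane :=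
  inferInstanceAs (TopologicalSpace (Quotient (projectivizationSetoid ℂ (Fin 3 → ℂ))))

/-- The embedding `ℂ² → ℂP²`, `(x, y) ↦ (x : y : 1)`. -/
def toProj (p : EuclideanSpace ℂ (Fin 2)) : ProjPlane :=
  Projectivization.mk ℂ ![p 0, p 1, 1] (fun h => by simpa using congrFun h 2)

/-- The line at infinity in `ℂP²`. -/
def lineAtInfinity : Set ProjPlane := {P | P.rep 2 = 0}

/-- The projective closure of a plane curve `X ⊂ ℂ²`: the topological closure in `ℂP²`. -/
def projClosure (X : Set (EuclideanSpace ℂ (Fin 2))) : Set ProjPlane :=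
  closure (toProj '' X)

/-- The germs `(A, p)` and `(B, q)` are (ambient) topologically equivalent. -/
def GermTopEquiv {T : Type*} [TopologicalSpace T] (A : Set T) (p : T) (B : Set T) (q : T) :
    Prop :=
  ∃ (U V : Set T) (φ ψ : T → T),
    IsOpen U ∧ IsOpen V ∧ p ∈ U ∧ q ∈ V ∧
    ContinuousOn φ U ∧ ContinuousOn ψ V ∧ Set.MapsTo φ U V ∧ Set.MapsTo ψ V U ∧
    (∀ x ∈ U, ψ (φ x) = x) ∧ (∀ y ∈ V, φ (ψ y) = y) ∧
    φ p = q ∧ φ '' (A ∩ U) = B ∩ V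

/-- The `i`-th standard affine chart of `ℂP²`. -/
def chart (i : Fin 3) (P : ProjPlane) : EuclideanSpace ℂ (Fin 2) :=
  (EuclideanSpace.equiv (Fin 2) ℂ).symm fun j => P.rep (i.succAbove j) / P.rep i

/-- A regular point of a curve `C ⊂ ℂP²`: read in a standard affine chart, some neighborhood
of `p` in `C` is the homeomorphic image of an injective holomorphic map with
nowhere-vanishing derivative. -/
def IsRegularPointProj (C : Set ProjPlane) (p : ProjPlane) : Prop :=
  ∃ i : Fin 3, p.rep i ≠ 0 ∧
    ∃ W : Set ProjPlane, IsOpen W ∧ p ∈ W ∧ W ⊆ {P : ProjPlane | P.rep i ≠ 0} ∧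
      ∃ (D : Set ℂ) (γ : ℂ → EuclideanSpace ℂ (Fin 2)),
        IsOpen D ∧ DifferentiableOn ℂ γ D ∧ Set.InjOn γ D ∧ (∀ z ∈ D, deriv γ z ≠ 0) ∧
        MapsHomeomorphicallyOnto γ D (chart i '' (C ∩ W))

/-- The set of singular points of a curve `C ⊂ ℂP²`. -/
def SingularSetProj (C : Set ProjPlane) : Set ProjPlane :=
  {p ∈ C | ¬ IsRegularPointProj C p}

/-- `C` is an irreducible component of the algebraic curve `X`. -/
def IsIrreducibleComponent {k : ℕ} (C X : Set (EuclideanSpace ℂ (Fin k))) : Prop :=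
  IsIrreducibleAlgebraicCurve C ∧ C ⊆ X ∧
    ∀ C', IsIrreducibleAlgebraicCurve C' → C' ⊆ X → C ⊆ C' → C' = C

/-- The degree of an algebraic plane curve: the minimal degree of a nonzero polynomial
vanishing identically on it. -/
def curveDegree (X : Set (EuclideanSpace ℂ (Fin 2))) : ℕ :=
  sInf {d | ∃ P : MvPolynomial (Fin 2) ℂ, P ≠ 0 ∧ P.totalDegree = d ∧
    ∀ x ∈ X, MvPolynomial.eval (fun i => x i) P = 0}
open Filter Topology

/-!
A linear form `L` in general position makes `Γ → ℂ` finite, proper, open and surjective, with at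
most `d` points in each fibre, and `‖p‖ = O(1 + |L p|)` on `Γ`. Take `v ≠ 0` with `L v = 0` and let
`Λ` consist of the points `q + (L q)ᵐ v` with `q ∈ Γ`, where `m > d`; it is the preimage of `Γ`
under a polynomial shear.

The curves differ in the number of sheets at infinity that run within `o(R)` of each other at
distance about `R` from the origin. On `Γ`, points within `o(R)` of each other have `L`-images in a
small disc; properness and openness join each of them, over this disc, to the fibre over the
centre, and two of `d + 1` points reach the same point of it. Rescaling by `R`, which turns the
integral equations of the coordinates over `ℂ[L]` into a compact family, shows that these paths
stay short compared with `R`. On `Λ`, the `m` points over `σ ω` with `ωᵐ = 1` all lie within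
`O(σ) = o(σᵐ)` of `σᵐ v`, but a connected piece of `Λ` of diameter `o(σᵐ)` keeps `(L / σ)ᵐ` close
to `1`, and so cannot pass from one root of unity to another. Bi-Lipschitz maps respect this count.
-/

section Topology

theorem exists_pos_pairwise_two_mul_le_dist {X : Type*} [MetricSpace X] {S : Set X}
    (hS : S.Finite) : ∃ ρ > 0, S.Pairwise fun s t => 2 * ρ ≤ dist s t := by
  rcases S.subsingleton_or_nontrivial with hsub | hnt
  · exact ⟨1, one_pos, hsub.pairwise _⟩
  · exact ⟨S.infsep / 2, half_pos (hS.infsep_pos_iff_nontrivial.mpr hnt), fun s hs t ht hst => by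
      linarith [infsep_le_dist_of_mem hs ht hst]⟩

theorem exists_subset_ball_of_isPreconnected {X : Type*} [PseudoMetricSpace X] {S C : Set X}
    {ρ : ℝ} (hS : S.Pairwise fun s t => 2 * ρ ≤ dist s t) (hC : IsPreconnected C)
    (hne : C.Nonempty) (hcover : C ⊆ ⋃ s ∈ S, ball s ρ) : ∃ s ∈ S, C ⊆ ball s ρ := by
  obtain ⟨x, hx⟩ := hne
  obtain ⟨s, hs, hxs⟩ : ∃ s ∈ S, x ∈ ball s ρ := by simpa using hcover hx
  refine ⟨s, hs, hC.subset_left_of_subset_union (v := ⋃ t ∈ S \ {s}, ball t ρ) isOpen_ball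
    (isOpen_biUnion fun t _ => isOpen_ball) ?_ (fun y hy => ?_) ⟨x, hx, hxs⟩⟩
  · refine disjoint_iUnion₂_right.mpr fun t ht => ball_disjoint_ball ?_
    linarith [hS hs ht.1 (Ne.symm ht.2)]
  · obtain ⟨t, ht, hyt⟩ : ∃ t ∈ S, y ∈ ball t ρ := by simpa using hcover hy
    by_cases hts : t = s
    · exact Or.inl (hts ▸ hyt)
    · exact Or.inr (mem_biUnion ⟨ht, hts⟩ hyt)

theorem exists_pos_forall_isPreconnected_dist_le_of_image_subset_ball {X Y : Type*}
    [MetricSpace X] [MetricSpace Y] {W : Set X} {f : X → Y} (hW : IsCompact W)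
    (hf : ContinuousOn f W) {y : Y} (hfiber : (W ∩ f ⁻¹' {y}).Finite) {ε : ℝ} (hε : 0 < ε) :
    ∃ δ > 0, ∀ C ⊆ W, IsPreconnected C → f '' C ⊆ ball y δ →
      ∀ p ∈ C, ∀ q ∈ C, dist p q ≤ ε := by
  obtain ⟨ρ₀, hρ₀, hsep⟩ := exists_pos_pairwise_two_mul_le_dist hfiber
  set ρ := min ρ₀ (ε / 2)
  have hρ : 0 < ρ := lt_min hρ₀ (half_pos hε)
  set U := ⋃ s ∈ W ∩ f ⁻¹' {y}, ball s ρ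
  have hK : IsCompact (f '' (W \ U)) :=
    (hW.diff (isOpen_biUnion fun s _ => isOpen_ball)).image_of_continuousOn (hf.mono sdiff_subset)
  have hyK : y ∉ f '' (W \ U) := by
    rintro ⟨p, ⟨hpW, hpU⟩, rfl⟩
    exact hpU (mem_biUnion ⟨hpW, rfl⟩ (mem_ball_self hρ))
  obtain ⟨δ, hδ, hball⟩ := Metric.mem_nhds_iff.mp (hK.isClosed.isOpen_compl.mem_nhds hyK)
  refine ⟨δ, hδ, fun C hCW hC hCf p hp q hq => ?_⟩
  have hCU : C ⊆ U := fun x hx => by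
    by_contra hxU
    exact hball (hCf (mem_image_of_mem f hx)) (mem_image_of_mem f ⟨hCW hx, hxU⟩)
  obtain ⟨s, -, hs⟩ := exists_subset_ball_of_isPreconnected
    (hsep.mono' fun s t (h : 2 * ρ₀ ≤ dist s t) => by linarith [min_le_left ρ₀ (ε / 2)])
    hC ⟨p, hp⟩ hCU
  linarith [dist_triangle_right p q s, mem_ball.mp (hs hp), mem_ball.mp (hs hq),
    min_le_right ρ₀ (ε / 2)]

theorem exists_pos_forall_isPreconnected_dist_le {X Y : Type*} [MetricSpace X] [MetricSpace Y]
    {W : Set X} {f : X → Y} (hW : IsCompact W) (hf : ContinuousOn f W)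
    (hfiber : ∀ y, (W ∩ f ⁻¹' {y}).Finite) {ε : ℝ} (hε : 0 < ε) :
    ∃ η > 0, ∀ C ⊆ W, IsPreconnected C → (∀ p ∈ C, ∀ q ∈ C, dist (f p) (f q) ≤ η) →
      ∀ p ∈ C, ∀ q ∈ C, dist p q ≤ ε := by
  choose δ hδ hlocal using fun y =>
    exists_pos_forall_isPreconnected_dist_le_of_image_subset_ball hW hf (hfiber y) hε
  obtain ⟨η, hη, hleb⟩ := lebesgue_number_lemma_of_metric (hW.image_of_continuousOn hf)
    (c := fun y => ball y (δ y)) (fun y => isOpen_ball)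
    (fun y _ => mem_iUnion.mpr ⟨y, mem_ball_self (hδ y)⟩)
  refine ⟨η / 2, half_pos hη, fun C hCW hC hCf p hp q hq => ?_⟩
  obtain ⟨y, hy⟩ := hleb (f p) (mem_image_of_mem f (hCW hp))
  refine hlocal y C hCW hC ?_ p hp q hq
  rintro _ ⟨r, hr, rfl⟩
  exact hy (mem_ball.mpr (by linarith [hCf r hr p hp]))

theorem image_eq_univ_of_isClopen {X Y : Type*} [TopologicalSpace X] [TopologicalSpace Y]
    [PreconnectedSpace Y] {f : X → Y} (hopen : IsOpenMap f) (hclosed : IsClosedMap f)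
    {Z : Set X} (hZ : IsClopen Z) (hne : Z.Nonempty) : f '' Z = univ :=
  IsClopen.eq_univ ⟨hclosed Z hZ.isClosed, hopen Z hZ.isOpen⟩ (hne.image f)

theorem image_connectedComponent_eq_univ {X Y : Type*} [TopologicalSpace X] [CompactSpace X]
    [T2Space X] [TopologicalSpace Y] [T1Space Y] [PreconnectedSpace Y] {f : X → Y}
    (hf : Continuous f) (hopen : IsOpenMap f) (hclosed : IsClosedMap f) (p : X) :
    f '' connectedComponent p = univ := by
  refine eq_univ_of_forall fun y => ?_
  have hfiber : IsClosed (f ⁻¹' {y}) := isClosed_singleton.preimage hf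
  obtain ⟨q, hq⟩ : (⋂ Z : {Z : Set X // IsClopen Z ∧ p ∈ Z}, f ⁻¹' {y} ∩ Z).Nonempty := by
    have : Nonempty {Z : Set X // IsClopen Z ∧ p ∈ Z} := ⟨⟨univ, isClopen_univ, mem_univ p⟩⟩
    refine IsCompact.nonempty_iInter_of_directed_nonempty_isCompact_isClosed _ ?_ ?_
      (fun Z => (hfiber.inter Z.2.1.isClosed).isCompact) (fun Z => hfiber.inter Z.2.1.isClosed)
    · exact fun Z Z' => ⟨⟨Z ∩ Z', Z.2.1.inter Z'.2.1, Z.2.2, Z'.2.2⟩,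
        inter_subset_inter_right _ inter_subset_left,
        inter_subset_inter_right _ inter_subset_right⟩
    · intro Z
      obtain ⟨q, hqZ, hqy⟩ : y ∈ f '' (Z : Set X) := by
        rw [image_eq_univ_of_isClopen hopen hclosed Z.2.1 ⟨p, Z.2.2⟩]
        exact mem_univ y
      exact ⟨q, hqy, hqZ⟩
  rw [mem_iInter] at hq
  refine ⟨q, ?_, (hq ⟨univ, isClopen_univ, mem_univ p⟩).1⟩
  rw [connectedComponent_eq_iInter_isClopen, mem_iInter]
  exact fun Z => (hq Z).2

theorem exists_mem_connectedComponentIn_preimage {X Y : Type*} [TopologicalSpace X] [T2Space X]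
    [TopologicalSpace Y] [T1Space Y] {f : X → Y} (hf : IsProperMap f) (hopen : IsOpenMap f)
    {D : Set Y} (hD : IsCompact D) (hconn : IsPreconnected D) {p : X} (hp : f p ∈ D) {y : Y}
    (hy : y ∈ D) : ∃ q ∈ connectedComponentIn (f ⁻¹' D) p, f q = y := by
  have : CompactSpace (f ⁻¹' D) := isCompact_iff_compactSpace.mp (hf.isCompact_preimage hD)
  have : PreconnectedSpace D := isPreconnected_iff_preconnectedSpace.mp hconn
  have hfD := hf.restrictPreimage D
  obtain ⟨q, hq, hqy⟩ : (⟨y, hy⟩ : D) ∈ D.restrictPreimage f '' connectedComponent ⟨p, hp⟩ := by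
    rw [image_connectedComponent_eq_univ hfD.continuous (hopen.restrictPreimage D) hfD.isClosedMap]
    exact mem_univ _
  rw [connectedComponentIn_eq_image (mem_preimage.mpr hp)]
  exact ⟨q, mem_image_of_mem _ hq, congrArg Subtype.val hqy⟩

end Topology

section SheetsAtInfinity

variable {E F : Type*} [NormedAddCommGroup E] [NormedAddCommGroup F]

/-- The bi-Lipschitz invariant telling `Γ` from its shears: among any `d + 1` points of `X` at
distance at most `R` from the origin and within a sufficiently small proportion of `R` of each
other, two can be joined inside `X` without moving far in proportion to `R`, once `R` is large. -/
def HasAtMostSheetsAtInfinity (X : Set E) (d : ℕ) : Prop :=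
  ∀ ε > 0, ∃ η > 0, ∀ᶠ R : ℝ in atTop, ∀ p : Fin (d + 1) → E, (∀ i, p i ∈ X) →
    (∀ i, ‖p i‖ ≤ R) → (∀ i j, dist (p i) (p j) ≤ η * R) →
    ∃ i j, i ≠ j ∧ p j ∈ connectedComponentIn (X ∩ closedBall (p i) (ε * R)) (p i)

theorem BiLipschitzEquiv.exists_lipschitzOnWith_inverse {X : Set E} {Y : Set F}
    (h : BiLipschitzEquiv X Y) : ∃ (f : E → F) (g : F → E) (K : NNReal), MapsTo f X Y ∧
      MapsTo g Y X ∧ LeftInvOn g f X ∧ LipschitzOnWith K f X ∧ LipschitzOnWith K g Y := by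
  obtain ⟨f, hf, K, hK, hbound⟩ := h
  have hinv : ∀ y ∈ Y, f (Function.invFunOn f X y) = y :=
    fun y hy => Function.invFunOn_eq (hf.surjOn hy)
  have hmem : MapsTo (Function.invFunOn f X) Y X := fun y hy => Function.invFunOn_mem (hf.surjOn hy)
  refine ⟨f, Function.invFunOn f X, K.toNNReal, hf.mapsTo, hmem, hf.injOn.leftInvOn_invFunOn,
    .of_dist_le_mul fun x hx x' hx' => ?_, .of_dist_le_mul fun y hy y' hy' => ?_⟩ <;>
    rw [Real.coe_toNNReal K (by linarith), dist_eq_norm, dist_eq_norm]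
  · exact (hbound x hx x' hx').2
  · have := (hbound _ (hmem hy) _ (hmem hy')).1
    rwa [hinv y hy, hinv y' hy', inv_mul_le_iff₀ (by linarith)] at this

theorem eventually_forall_norm_le_of_lipschitzOnWith {X : Set E} {f : E → F} {K : NNReal}
    (hf : LipschitzOnWith K f X) :
    ∀ᶠ R : ℝ in atTop, ∀ x ∈ X, ‖x‖ ≤ R → ‖f x‖ ≤ (K + 1) * R := by
  rcases X.eq_empty_or_nonempty with rfl | ⟨b, hb⟩
  · simp
  filter_upwards [eventually_ge_atTop (‖f b‖ + K * ‖b‖)] with R hR x hx hxR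
  calc ‖f x‖ ≤ ‖f b‖ + dist (f x) (f b) := by
        rw [dist_eq_norm]; exact norm_le_norm_add_norm_sub' _ _
    _ ≤ ‖f b‖ + K * (‖x‖ + ‖b‖) := by
        gcongr
        exact (hf.dist_le_mul x hx b hb).trans (by rw [dist_eq_norm]; gcongr; exact norm_sub_le _ _)
    _ ≤ (K + 1) * R := by nlinarith [K.coe_nonneg]

theorem BiLipschitzEquiv.hasAtMostSheetsAtInfinity {X : Set E} {Y : Set F} {d : ℕ}
    (h : BiLipschitzEquiv X Y) (hY : HasAtMostSheetsAtInfinity Y d) :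
    HasAtMostSheetsAtInfinity X d := by
  obtain ⟨f, g, K, hfXY, hgYX, hgf, hfK, hgK⟩ := h.exists_lipschitzOnWith_inverse
  intro ε hε
  have hK : (0 : ℝ) < K + 1 := by positivity
  obtain ⟨η, hη, hsheets⟩ := hY (ε / (K + 1) ^ 2) (by positivity)
  refine ⟨η, hη, ?_⟩
  filter_upwards [(tendsto_id.const_mul_atTop hK).eventually hsheets,
    eventually_forall_norm_le_of_lipschitzOnWith hfK, eventually_ge_atTop 0]
    with R hR hfR hR₀ p hpX hpR hpη
  obtain ⟨i, j, hij, hjoin⟩ := hR (fun i => f (p i)) (fun i => hfXY (hpX i))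
    (fun i => hfR _ (hpX i) (hpR i)) fun i j => by
      calc dist (f (p i)) (f (p j)) ≤ K * (η * R) :=
            (hfK.dist_le_mul _ (hpX i) _ (hpX j)).trans (by gcongr; exact hpη i j)
        _ ≤ η * ((K + 1) * R) := by linarith [mul_nonneg hη.le hR₀]
  refine ⟨i, j, hij, ?_⟩
  set Z := Y ∩ closedBall (f (p i)) (ε / (K + 1) ^ 2 * ((K + 1) * R))
  have hball : MapsTo g Z (X ∩ closedBall (p i) (ε * R)) := fun y ⟨hy, hdist⟩ => by
    refine ⟨hgYX hy, ?_⟩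
    have := hgK.dist_le_mul y hy _ (hfXY (hpX i))
    rw [hgf (hpX i)] at this
    calc dist (g y) (p i) ≤ (K + 1) * (ε / (K + 1) ^ 2 * ((K + 1) * R)) := by
          refine this.trans (mul_le_mul (by linarith) hdist dist_nonneg hK.le)
      _ = ε * R := by field_simp
  have himage : IsPreconnected (g '' connectedComponentIn Z (f (p i))) :=
    isPreconnected_connectedComponentIn.image g
      (hgK.continuousOn.mono ((connectedComponentIn_subset _ _).trans inter_subset_left))
  refine himage.subset_connectedComponentIn ⟨f (p i), ?_, hgf (hpX i)⟩
    ((image_mono (connectedComponentIn_subset _ _)).trans hball.image_subset)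
    ⟨f (p j), hjoin, hgf (hpX j)⟩
  exact mem_connectedComponentIn ⟨hfXY (hpX i), mem_closedBall_self (by positivity)⟩

end SheetsAtInfinity

theorem exists_ringHom_comp_algebraMap_eq {R A K : Type*} [CommRing R] [CommRing A] [Algebra R A]
    [Algebra.IsIntegral R A] [Field K] [IsAlgClosed K] {ψ : R →+* K}
    (hker : RingHom.ker (algebraMap R A) ≤ RingHom.ker ψ) :
    ∃ φ : A →+* K, φ.comp (algebraMap R A) = ψ := by
  have : (RingHom.ker ψ).IsPrime := RingHom.ker_isPrime ψ
  obtain ⟨Q, -, hQ, hQψ⟩ := Ideal.exists_ideal_over_prime_of_isIntegral (S := A)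
    (RingHom.ker ψ) ⊥ hker
  have : Q.LiesOver (RingHom.ker ψ) := ⟨hQψ.symm⟩
  let : Algebra (R ⧸ RingHom.ker ψ) K := (RingHom.kerLift ψ).toAlgebra
  have : Module.IsTorsionFree (R ⧸ RingHom.ker ψ) K :=
    Module.isTorsionFree_iff_algebraMap_injective.mpr (RingHom.kerLift_injective ψ)
  have : Module.IsTorsionFree (R ⧸ RingHom.ker ψ) (A ⧸ Q) :=
    Module.isTorsionFree_iff_faithfulSMul.mpr inferInstance
  let lift : A ⧸ Q →ₐ[R ⧸ RingHom.ker ψ] K := IsAlgClosed.lift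
  refine ⟨(lift : A ⧸ Q →+* K).comp (Ideal.Quotient.mk Q), RingHom.ext fun r => ?_⟩
  exact lift.commutes (Ideal.Quotient.mk _ r)

theorem exists_isRoot_dist_lt {K : Type*} [NormedField K] [IsAlgClosed K] {Q : Polynomial K}
    (hQ : Q.Monic) {ρ : ℝ} (hρ : 0 ≤ ρ) {y : K} (hy : ‖Q.eval y‖ < ρ ^ Q.natDegree) :
    ∃ s, Q.IsRoot s ∧ dist y s < ρ := by
  by_contra! hfar
  have hprod : ‖Q.eval y‖ = (Q.roots.map fun s => ‖y - s‖).prod := by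
    rw [(IsAlgClosed.splits Q).eval_eq_prod_roots_of_monic hQ, ← normHom_apply,
      map_multiset_prod, Multiset.map_map]
    rfl
  refine hy.not_ge ?_
  calc ρ ^ Q.natDegree = (Q.roots.map fun _ => ρ).prod := by
        rw [Multiset.map_const', Multiset.prod_replicate,
          (IsAlgClosed.splits Q).natDegree_eq_card_roots]
    _ ≤ ‖Q.eval y‖ := by
        rw [hprod]
        refine Multiset.prod_map_le_prod_map₀ _ _ (fun _ _ => hρ) fun s hs => ?_
        rw [← dist_eq_norm]
        exact hfar s (Polynomial.isRoot_of_mem_roots hs)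

theorem exists_pow_eq_one_dist_lt {K : Type*} [NormedField K] [IsAlgClosed K] {m : ℕ}
    (hm : m ≠ 0) {ρ : ℝ} (hρ : 0 ≤ ρ) {y : K} (hy : ‖y ^ m - 1‖ < ρ ^ m) :
    ∃ ω : K, ω ^ m = 1 ∧ dist y ω < ρ := by
  obtain ⟨ω, hω, hdist⟩ := exists_isRoot_dist_lt (Polynomial.monic_X_pow_sub_C (1 : K) hm) hρ
    (y := y) (by rw [Polynomial.natDegree_X_pow_sub_C]; simpa using hy)
  exact ⟨ω, by simpa [sub_eq_zero] using hω, hdist⟩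

theorem exists_forall_isRoot_norm_le {K σ : Type*} [NormedField K]
    {P : Polynomial (MvPolynomial σ K)} (hP : P.Monic) {Z : Set (σ → K)} (hZ : IsCompact Z) :
    ∃ M : ℝ, ∀ z ∈ Z, ∀ y, (P.map (MvPolynomial.eval z)).IsRoot y → ‖y‖ ≤ M := by
  have hcoeff : ∀ i, ∃ M, ∀ z ∈ Z, ‖MvPolynomial.eval z (P.coeff i)‖ ≤ M := fun i =>
    hZ.exists_bound_of_continuousOn (MvPolynomial.continuous_eval _).continuousOn
  choose M hM using hcoeff
  refine ⟨(((Finset.range P.natDegree).sup fun i => (M i).toNNReal) + 1 : NNReal),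
    fun z hz y hy => ?_⟩
  refine NNReal.coe_le_coe.mpr ((hy.norm_lt_cauchyBound (hP.map _).ne_zero).le.trans ?_)
  rw [Polynomial.cauchyBound, (hP.map _).leadingCoeff, hP.natDegree_map, nnnorm_one, div_one]
  gcongr with i
  rw [Polynomial.coeff_map]
  exact (hM i z hz).trans (Real.le_coe_toNNReal _)

theorem continuous_eval_map_eval {K σ : Type*} [CommRing K] [TopologicalSpace K]
    [IsTopologicalRing K] (P : Polynomial (MvPolynomial σ K)) :
    Continuous fun w : (σ → K) × K => (P.map (MvPolynomial.eval w.1)).eval w.2 := by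
  simp only [Polynomial.eval_map, Polynomial.eval₂_eq_sum_range]
  exact continuous_finsetSum _ fun i _ =>
    ((MvPolynomial.continuous_eval _).comp continuous_fst).mul (continuous_snd.pow i)

theorem natDegree_prod_pow_le_and_coeff_eq {S σ : Type*} [CommRing S] {f : σ → Polynomial S}
    (hf : ∀ i, (f i).natDegree ≤ 1) (m : σ → ℕ) (s : Finset σ) :
    (∏ i ∈ s, f i ^ m i).natDegree ≤ ∑ i ∈ s, m i ∧
      (∏ i ∈ s, f i ^ m i).coeff (∑ i ∈ s, m i) = ∏ i ∈ s, (f i).coeff 1 ^ m i := by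
  classical
  induction s using Finset.induction_on with
  | empty => simp
  | insert a s ha ih =>
    have hpow : (f a ^ m a).natDegree ≤ m a := by
      simpa using Polynomial.natDegree_pow_le_of_le (m a) (hf a)
    have hcoeff : (f a ^ m a).coeff (m a) = (f a).coeff 1 ^ m a := by
      simpa using Polynomial.coeff_pow_of_natDegree_le (m := m a) (hf a)
    rw [Finset.prod_insert ha, Finset.sum_insert ha, Finset.prod_insert ha,
      Polynomial.coeff_mul_add_eq_of_natDegree_le hpow ih.1, hcoeff, ih.2]
    exact ⟨Polynomial.natDegree_mul_le_of_le hpow ih.1, rfl⟩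

theorem sum_support_eq_of_isHomogeneous {R σ : Type*} [CommRing R] {F : MvPolynomial σ R} {e : ℕ}
    (hF : F.IsHomogeneous e) {m : σ →₀ ℕ} (hm : m ∈ F.support) : ∑ i ∈ m.support, m i = e := by
  rw [← Finsupp.degree_apply, Finsupp.degree_eq_weight_one]
  exact hF (MvPolynomial.mem_support_iff.mp hm)

theorem aeval_mul_left_of_isHomogeneous {R S σ : Type*} [CommRing R] [CommRing S] [Algebra R S]
    {F : MvPolynomial σ R} {e : ℕ} (hF : F.IsHomogeneous e) (c : S) (f : σ → S) :
    MvPolynomial.aeval (fun i => c * f i) F = c ^ e * MvPolynomial.aeval f F := by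
  simp only [MvPolynomial.aeval_eq_eval₂Hom, MvPolynomial.coe_eval₂Hom, MvPolynomial.eval₂_eq,
    Finset.mul_sum]
  refine Finset.sum_congr rfl fun m hm => ?_
  rw [← sum_support_eq_of_isHomogeneous hF hm, ← Finset.prod_pow_eq_pow_sum]
  simp only [mul_pow, Finset.prod_mul_distrib]
  ring

theorem natDegree_aeval_le_and_coeff_eq {R S σ : Type*} [CommRing R] [CommRing S] [Algebra R S]
    {F : MvPolynomial σ R} {e : ℕ} (hF : F.IsHomogeneous e) {f : σ → Polynomial S}
    (hf : ∀ i, (f i).natDegree ≤ 1) :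
    (MvPolynomial.aeval f F).natDegree ≤ e ∧
      (MvPolynomial.aeval f F).coeff e = MvPolynomial.aeval (fun i => (f i).coeff 1) F := by
  simp only [MvPolynomial.aeval_eq_eval₂Hom, MvPolynomial.coe_eval₂Hom, MvPolynomial.eval₂_eq,
    Polynomial.finsetSum_coeff, Polynomial.algebraMap_apply, Polynomial.coeff_C_mul]
  have hmonomial : ∀ m ∈ F.support, (∏ i ∈ m.support, f i ^ m i).natDegree ≤ e ∧
      (∏ i ∈ m.support, f i ^ m i).coeff e = ∏ i ∈ m.support, (f i).coeff 1 ^ m i := fun m hm =>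
    sum_support_eq_of_isHomogeneous hF hm ▸ natDegree_prod_pow_le_and_coeff_eq hf m m.support
  exact ⟨Polynomial.natDegree_sum_le_of_forall_le _ _ fun m hm =>
      (Polynomial.natDegree_C_mul_le _ _).trans (hmonomial m hm).1,
    Finset.sum_congr rfl fun m hm => by rw [(hmonomial m hm).2]⟩

theorem exists_eval_neg_one_ne_zero {K : Type*} [Field K] [Infinite K] {F : MvPolynomial (Fin 2) K}
    {e : ℕ} (hF : F.IsHomogeneous e) (hne : F ≠ 0) :
    ∃ t : K, MvPolynomial.eval ![-t, 1] F ≠ 0 := by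
  by_contra! hzero
  have hmul : F * MvPolynomial.X 1 = 0 := MvPolynomial.funext fun x => by
    rcases eq_or_ne (x 1) 0 with hx | hx
    · simp [hx]
    have hx' : x = fun i => x 1 * ![-(-(x 0 / x 1)), 1] i := by
      ext i; fin_cases i <;> simp [mul_div_cancel₀, hx]
    have := aeval_mul_left_of_isHomogeneous hF (x 1) ![-(-(x 0 / x 1)), 1]
    rw [← hx', MvPolynomial.aeval_eq_eval, MvPolynomial.aeval_eq_eval, hzero, mul_zero] at this
    rw [map_mul, this, zero_mul, map_zero]
  exact (mul_ne_zero hne (MvPolynomial.X_ne_zero 1)) hmul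

theorem homogeneousComponent_totalDegree_ne_zero {R σ : Type*} [CommRing R] {Q : MvPolynomial σ R}
    (hQ : Q ≠ 0) : MvPolynomial.homogeneousComponent Q.totalDegree Q ≠ 0 := by
  obtain ⟨m, hm, hdeg⟩ := Finset.exists_mem_eq_sup Q.support
    (MvPolynomial.support_nonempty.mpr hQ) fun s => s.sum fun _ e => e
  refine MvPolynomial.ne_zero_iff.mpr ⟨m, ?_⟩
  rw [MvPolynomial.coeff_homogeneousComponent,
    if_pos (show m.degree = Q.totalDegree from hdeg.symm)]
  exact MvPolynomial.mem_support_iff.mp hm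

theorem aeval_homogenization_eq_zero {R S σ : Type*} [CommRing R] [CommRing S] [Algebra R S]
    {Q : MvPolynomial σ R} {f : σ → S} (hQ : MvPolynomial.aeval f Q = 0) (c : S) :
    ∑ i ∈ Finset.range (Q.totalDegree + 1), c ^ (Q.totalDegree - i) *
      MvPolynomial.aeval (fun j => c * f j) (MvPolynomial.homogeneousComponent i Q) = 0 := by
  calc _ = c ^ Q.totalDegree * MvPolynomial.aeval f
        (∑ i ∈ Finset.range (Q.totalDegree + 1), MvPolynomial.homogeneousComponent i Q) := by
        rw [map_sum, Finset.mul_sum]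
        refine Finset.sum_congr rfl fun i hi => ?_
        rw [aeval_mul_left_of_isHomogeneous (MvPolynomial.homogeneousComponent_isHomogeneous i Q),
          ← mul_assoc, pow_sub_mul_pow _ (Finset.mem_range_succ_iff.mp hi)]
    _ = 0 := by rw [MvPolynomial.sum_homogeneousComponent, hQ, mul_zero]

theorem natDegree_sum_homogeneousComponent_le_and_coeff_eq {R S σ : Type*} [CommRing R]
    [CommRing S] [Algebra R S] {Q : MvPolynomial σ R} (c : S) {f : σ → Polynomial S}
    (hf : ∀ i, (f i).natDegree ≤ 1) {G : Polynomial S}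
    (hG : G = ∑ i ∈ Finset.range (Q.totalDegree + 1), .C (c ^ (Q.totalDegree - i)) *
      MvPolynomial.aeval f (MvPolynomial.homogeneousComponent i Q)) :
    G.natDegree ≤ Q.totalDegree ∧ G.coeff Q.totalDegree = MvPolynomial.aeval
      (fun i => (f i).coeff 1) (MvPolynomial.homogeneousComponent Q.totalDegree Q) := by
  have hcomponent := fun i => natDegree_aeval_le_and_coeff_eq
    (MvPolynomial.homogeneousComponent_isHomogeneous i Q) hf
  have hterm : ∀ i, (.C (c ^ (Q.totalDegree - i)) * MvPolynomial.aeval f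
      (MvPolynomial.homogeneousComponent i Q) : Polynomial S).natDegree ≤ i := fun i =>
    (Polynomial.natDegree_C_mul_le _ _).trans (hcomponent i).1
  subst hG
  refine ⟨Polynomial.natDegree_sum_le_of_forall_le _ _ fun i hi =>
    (hterm i).trans (Finset.mem_range_succ_iff.mp hi), ?_⟩
  rw [Polynomial.finsetSum_coeff, Finset.sum_range_succ, Finset.sum_eq_zero fun i hi =>
    Polynomial.coeff_eq_zero_of_natDegree_lt ((hterm i).trans_lt (Finset.mem_range.mp hi))]
  simp [(hcomponent Q.totalDegree).2]

/- With `w = u + t v`, the relation becomes a polynomial equation for `v` over `R[T, w]` whose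
coefficient in degree `totalDegree Q` is the value at `(-t, 1)` of the leading form of `Q`. -/
theorem exists_forall_isIntegral_of_homogenization_eq_zero {K A : Type*} [Field K] [Infinite K]
    [CommRing A] [Algebra K A] {T u v : A} {Q : MvPolynomial (Fin 2) K} (hQ : Q ≠ 0)
    (hrel : ∑ i ∈ Finset.range (Q.totalDegree + 1), T ^ (Q.totalDegree - i) *
      MvPolynomial.aeval ![u, v] (MvPolynomial.homogeneousComponent i Q) = 0) :
    ∃ t : K, ∀ S : Subalgebra K A, T ∈ S → u + t • v ∈ S → IsIntegral S v := by
  obtain ⟨t, ht⟩ := exists_eval_neg_one_ne_zero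
    (MvPolynomial.homogeneousComponent_isHomogeneous _ Q)
    (homogeneousComponent_totalDegree_ne_zero hQ)
  refine ⟨t, fun S hT hw => ?_⟩
  let f : Fin 2 → Polynomial S := ![.C ⟨u + t • v, hw⟩ - .C (algebraMap K S t) * .X, .X]
  have hf : ∀ j, (f j).natDegree ≤ 1 := fun j => by
    fin_cases j
    · exact Polynomial.natDegree_sub_le_of_le (m := 0) (n := 1) (by simp)
        ((Polynomial.natDegree_C_mul_le _ _).trans Polynomial.natDegree_X_le)
    · exact Polynomial.natDegree_X_le
  have hf_coeff : (fun j => (f j).coeff 1) = algebraMap K S ∘ ![-t, 1] := by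
    ext j; fin_cases j <;> simp [f, Polynomial.coeff_C]
  have hf_aeval : (fun j => Polynomial.aeval v (f j)) = ![u, v] := by
    ext j; fin_cases j
    · simp [f, Algebra.smul_def, Subalgebra.algebraMap_eq]
    · simp [f]
  obtain ⟨G, hG⟩ : ∃ G : Polynomial S, G = ∑ i ∈ Finset.range (Q.totalDegree + 1),
    .C (⟨T, hT⟩ ^ (Q.totalDegree - i)) * MvPolynomial.aeval f
      (MvPolynomial.homogeneousComponent i Q) := ⟨_, rfl⟩
  obtain ⟨hdeg, hlead⟩ := natDegree_sum_homogeneousComponent_le_and_coeff_eq _ hf hG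
  rw [hf_coeff, MvPolynomial.aeval_algebraMap_apply, MvPolynomial.aeval_eq_eval] at hlead
  have hcomponent : ∀ F : MvPolynomial (Fin 2) K,
      Polynomial.aeval v (MvPolynomial.aeval f F) = MvPolynomial.aeval ![u, v] F := fun F =>
    hf_aeval ▸ MvPolynomial.comp_aeval_apply (f := f)
      ((Polynomial.aeval (R := S) v).restrictScalars K) F
  have hroot : Polynomial.aeval v G = 0 := by
    simp only [← hrel, hG, map_sum, map_mul, map_pow, Polynomial.aeval_C, hcomponent]
    rfl
  refine ⟨Polynomial.C (algebraMap K S (MvPolynomial.eval ![-t, 1]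
    (MvPolynomial.homogeneousComponent Q.totalDegree Q))⁻¹) * G,
    Polynomial.monic_of_natDegree_le_of_coeff_eq_one Q.totalDegree
      ((Polynomial.natDegree_C_mul_le _ _).trans hdeg) ?_, ?_⟩
  · rw [Polynomial.coeff_C_mul, hlead, ← map_mul, inv_mul_cancel₀ ht, map_one]
  · rw [← Polynomial.aeval_def, map_mul, hroot, mul_zero]

theorem isIntegral_of_isIntegral_adjoin {K A : Type*} [CommRing K] [CommRing A] [Algebra K A]
    {s : Set A} {S : Subalgebra K A} (hs : ∀ a ∈ s, IsIntegral S a) {x : A}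
    (hx : IsIntegral (Algebra.adjoin K s) x) : IsIntegral S x := by
  have hle : Algebra.adjoin K s ≤ (integralClosure S A).restrictScalars K := Algebra.adjoin_le hs
  let inclusion : Algebra.adjoin K s →+* integralClosure S A :=
    (algebraMap _ A).codRestrict _ fun a => hle a.2
  obtain ⟨P, hP, hPx⟩ := hx
  exact isIntegral_trans (A := integralClosure S A) x
    ⟨P.map inclusion, hP.map _, by rwa [Polynomial.eval₂_map]⟩

theorem exists_monic_eval₂_aeval_eq_zero {K A σ : Type*} [CommRing K] [CommRing A] [Algebra K A]
    {f : σ → A} {x : A} (hx : IsIntegral (Algebra.adjoin K (range f)) x) :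
    ∃ P : Polynomial (MvPolynomial σ K), P.Monic ∧
      P.eval₂ (MvPolynomial.aeval f : MvPolynomial σ K →ₐ[K] A).toRingHom x = 0 := by
  rw [Algebra.adjoin_range_eq_range_aeval] at hx
  let φ : MvPolynomial σ K →ₐ[K] A := MvPolynomial.aeval f
  let : Algebra (MvPolynomial σ K) A := φ.toRingHom.toAlgebra
  let : Algebra (MvPolynomial σ K) φ.range := φ.rangeRestrict.toRingHom.toAlgebra
  have : IsScalarTower (MvPolynomial σ K) φ.range A := .of_algebraMap_eq fun _ => rfl
  have : Algebra.IsIntegral (MvPolynomial σ K) φ.range :=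
    Algebra.isIntegral_of_surjective φ.rangeRestrict_surjective
  exact isIntegral_trans x hx

open Polynomial in
theorem exists_forall_isIntegral_of_aeval_eq_zero {K B : Type*} [Field K] [Infinite K] [CommRing B]
    [Algebra K B] {u v : B} {Q : MvPolynomial (Fin 2) K} (hQ : Q ≠ 0)
    (hrel : MvPolynomial.aeval ![u, v] Q = 0) :
    ∃ t : K, ∀ S : Subalgebra K B[X], X ∈ S → X * C (u + t • v) ∈ S → IsIntegral S (X * C v) := by
  have hC : MvPolynomial.aeval (fun j => C (![u, v] j)) Q = 0 := by
    have := MvPolynomial.comp_aeval_apply ![u, v] (CAlgHom : B →ₐ[K] B[X]) Q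
    rwa [hrel, map_zero, eq_comm] at this
  have hvec : (fun j => X * C (![u, v] j)) = ![X * C u, X * C v] := by
    ext1 j; fin_cases j <;> rfl
  obtain ⟨t, ht⟩ := exists_forall_isIntegral_of_homogenization_eq_zero hQ
    (hvec ▸ aeval_homogenization_eq_zero hC X)
  refine ⟨t, fun S hX hS => ht S hX ?_⟩
  rwa [map_add, mul_add, ← smul_C, mul_smul_comm] at hS

open Polynomial in
theorem exists_mem_span_isIntegral_adjoin {K B ι : Type*} [Field K] [Infinite K] [CommRing B]
    [Algebra K B]
    (hdep : ∀ f : Fin 2 → B, ∃ Q : MvPolynomial (Fin 2) K, Q ≠ 0 ∧ MvPolynomial.aeval f Q = 0)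
    (b : ι → B) (s : Finset ι) :
    ∃ u ∈ Submodule.span K (range b), ∀ j ∈ s,
      IsIntegral (Algebra.adjoin K (range ![X, X * C u])) (X * C (b j)) := by
  classical
  induction s using Finset.induction_on with
  | empty => exact ⟨0, zero_mem _, by simp⟩
  | insert k s _ ih =>
    obtain ⟨u, hu, hint⟩ := ih
    obtain ⟨Q, hQ, hrel⟩ := hdep ![u, b k]
    obtain ⟨t, ht⟩ := exists_forall_isIntegral_of_aeval_eq_zero hQ hrel
    set S := Algebra.adjoin K (range ![X, X * C (u + t • b k)])
    have hX : X ∈ S := Algebra.subset_adjoin ⟨0, rfl⟩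
    have hXu : X * C (u + t • b k) ∈ S := Algebra.subset_adjoin ⟨1, rfl⟩
    have hk : IsIntegral S (X * C (b k)) := ht S hX hXu
    have hu' : IsIntegral S (X * C u) := by
      have : X * C u = X * C (u + t • b k) - t • (X * C (b k)) := by
        rw [map_add, ← smul_C, mul_add, mul_smul_comm, add_sub_cancel_right]
      rw [this]
      exact (isIntegral_algebraMap (x := (⟨_, hXu⟩ : S))).sub (hk.smul t)
    refine ⟨u + t • b k, add_mem hu (Submodule.smul_mem _ _ (Submodule.subset_span ⟨k, rfl⟩)),
      (Finset.forall_mem_insert _ _ _).mpr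
        ⟨hk, fun j hj => isIntegral_of_isIntegral_adjoin ?_ (hint j hj)⟩⟩
    rintro _ ⟨i, rfl⟩
    fin_cases i
    exacts [isIntegral_algebraMap (x := (⟨_, hX⟩ : S)), hu']

open Polynomial in
theorem exists_monic_forall_isRoot_mul {K B : Type*} [CommRing K] [CommRing B] [Algebra K B]
    {u v : B} (hv : IsIntegral (Algebra.adjoin K (range ![X, X * C u])) (X * C v)) :
    ∃ P : Polynomial (MvPolynomial (Fin 2) K), P.Monic ∧ ∀ (τ : K) (φ : B →ₐ[K] K),
      (P.map (MvPolynomial.eval ![τ, τ * φ u])).IsRoot (τ * φ v) := by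
  obtain ⟨P, hP, hPv⟩ := exists_monic_eval₂_aeval_eq_zero hv
  refine ⟨P, hP, fun τ φ => ?_⟩
  let evalAt : B[X] →+* K := eval₂RingHom φ.toRingHom τ
  have hcomp : evalAt.comp (MvPolynomial.aeval ![X, X * C u] :
      MvPolynomial (Fin 2) K →ₐ[K] B[X]).toRingHom = MvPolynomial.eval ![τ, τ * φ u] := by
    refine MvPolynomial.ringHom_ext (fun c => ?_) fun i => ?_
    · simp [evalAt, IsScalarTower.algebraMap_apply K B B[X]]
    · fin_cases i <;> simp [evalAt, mul_comm τ]
  have hzero := congrArg evalAt hPv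
  rw [hom_eval₂, hcomp, map_zero] at hzero
  rw [IsRoot, eval_map, ← hzero]
  simp [evalAt, mul_comm τ]

section RegularFunctions

variable {n : ℕ} {Γ : Set (EuclideanSpace ℂ (Fin n))}

/-- The coordinate ring of `Γ`, realised as the algebra of restrictions to `Γ` of polynomial
functions. -/
def regularFunctions (Γ : Set (EuclideanSpace ℂ (Fin n))) : Subalgebra ℂ (Γ → ℂ) :=
  (MvPolynomial.aeval fun i (p : Γ) => p.1 i : MvPolynomial (Fin n) ℂ →ₐ[ℂ] Γ → ℂ).range

/-- Restriction of polynomial functions to `Γ`. -/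
def restrictPolynomial (Γ : Set (EuclideanSpace ℂ (Fin n))) :
    MvPolynomial (Fin n) ℂ →ₐ[ℂ] regularFunctions Γ :=
  AlgHom.rangeRestrict _

theorem restrictPolynomial_surjective : Function.Surjective (restrictPolynomial Γ) :=
  AlgHom.rangeRestrict_surjective _

theorem restrictPolynomial_apply (F : MvPolynomial (Fin n) ℂ) (p : Γ) :
    (restrictPolynomial Γ F).1 p = MvPolynomial.eval (fun i => p.1 i) F := by
  rw [← MvPolynomial.aeval_eq_eval]
  exact MvPolynomial.comp_aeval_apply _ (Pi.evalAlgHom ℂ (fun _ : Γ => ℂ) p) F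

/-- Evaluation of regular functions at a point of `Γ`. -/
def evalPoint (p : Γ) : regularFunctions Γ →ₐ[ℂ] ℂ :=
  (Pi.evalAlgHom ℂ (fun _ : Γ => ℂ) p).comp (regularFunctions Γ).val

theorem evalPoint_apply (p : Γ) (f : regularFunctions Γ) : evalPoint p f = f.1 p := rfl

theorem mem_regularFunctions {f : Γ → ℂ} :
    f ∈ regularFunctions Γ ↔ ∃ F, ∀ p : Γ, MvPolynomial.eval (fun i => p.1 i) F = f p := by
  simp only [← restrictPolynomial_apply, ← funext_iff]
  exact Iff.rfl

theorem coord_mem_regularFunctions (i : Fin n) : (fun p : Γ => p.1 i) ∈ regularFunctions Γ :=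
  mem_regularFunctions.mpr ⟨MvPolynomial.X i, fun _ => MvPolynomial.eval_X i⟩

/-- The `j`-th coordinate as a regular function. -/
def coordFunction (Γ : Set (EuclideanSpace ℂ (Fin n))) (j : Fin n) : regularFunctions Γ :=
  ⟨fun p => p.1 j, coord_mem_regularFunctions j⟩

theorem restrictPolynomial_X (i : Fin n) :
    restrictPolynomial Γ (MvPolynomial.X i) = coordFunction Γ i :=
  Subtype.ext <| funext fun p => (restrictPolynomial_apply _ p).trans (MvPolynomial.eval_X i)

theorem linear_mem_regularFunctions (L : EuclideanSpace ℂ (Fin n) →L[ℂ] ℂ) :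
    (fun p : Γ => L p) ∈ regularFunctions Γ := by
  have hL : (fun p : Γ => L p) = ∑ i, L (EuclideanSpace.single i 1) • fun p : Γ => p.1 i := by
    ext p
    conv_lhs => rw [← (EuclideanSpace.basisFun (Fin n) ℂ).sum_repr p.1]
    simp [mul_comm]
  rw [hL]
  exact sum_mem fun i _ => Subalgebra.smul_mem _ (coord_mem_regularFunctions i) _

theorem continuous_of_mem_regularFunctions {f : Γ → ℂ} (hf : f ∈ regularFunctions Γ) :
    Continuous f := by
  obtain ⟨F, hF⟩ := mem_regularFunctions.mp hf
  rw [← funext hF]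
  exact F.continuous_eval.comp (by fun_prop)

theorem IsAlgebraicSet.isClosed (hΓ : IsAlgebraicSet Γ) : IsClosed Γ := by
  obtain ⟨S, rfl⟩ := hΓ
  simp only [ofPred_forall]
  exact isClosed_biInter fun F _ =>
    isClosed_eq (F.continuous_eval.comp (by fun_prop)) continuous_const

theorem IsIrreducibleAlgebraicCurve.finite_zeros (hΓ : IsIrreducibleAlgebraicCurve Γ) {f : Γ → ℂ}
    (hf : f ∈ regularFunctions Γ) (hne : f ≠ 0) : {p | f p = 0}.Finite := by
  classical
  obtain ⟨⟨S, hS⟩, -, hproper⟩ := hΓ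
  obtain ⟨F, hF⟩ := mem_regularFunctions.mp hf
  suffices hfin : (Γ ∩ {x | MvPolynomial.eval (fun i => x i) F = 0}).Finite by
    refine (hfin.preimage Subtype.val_injective.injOn).subset fun p hp => ⟨p.2, ?_⟩
    rwa [mem_ofPred_eq, hF]
  refine hproper _ ⟨insert F S, by ext x; simp [hS, and_comm]⟩ (inter_subset_left.ssubset_of_ne ?_)
  refine fun heq => hne (funext fun p => ?_)
  rw [← hF]
  exact (heq.symm.subset p.2).2

theorem IsIrreducibleAlgebraicCurve.isDomain_regularFunctions
    (hΓ : IsIrreducibleAlgebraicCurve Γ) : IsDomain (regularFunctions Γ) := by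
  have : Infinite Γ := hΓ.2.1.to_subtype
  have : NoZeroDivisors (regularFunctions Γ) := ⟨fun {f g} hfg => by
    by_contra! hne
    refine infinite_univ (((hΓ.finite_zeros f.2 fun h => hne.1 (Subtype.ext h)).union
      (hΓ.finite_zeros g.2 fun h => hne.2 (Subtype.ext h))).subset fun p _ => ?_)
    exact mul_eq_zero.mp (congrFun (congrArg Subtype.val hfg) p)⟩
  have : Nontrivial (regularFunctions Γ) := inferInstance
  exact NoZeroDivisors.to_isDomain _

theorem IsAlgebraicSet.exists_evalPoint_eq (hΓ : IsAlgebraicSet Γ)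
    (φ : regularFunctions Γ →ₐ[ℂ] ℂ) : ∃ p : Γ, evalPoint p = φ := by
  obtain ⟨S, hS⟩ := hΓ
  let p : EuclideanSpace ℂ (Fin n) :=
    WithLp.toLp 2 fun i => φ (restrictPolynomial Γ (MvPolynomial.X i))
  have hφ : ∀ F, φ (restrictPolynomial Γ F) = MvPolynomial.eval (fun i => p i) F := fun F => by
    rw [← MvPolynomial.aeval_eq_eval]
    exact DFunLike.congr_fun (MvPolynomial.algHom_ext (f := φ.comp (restrictPolynomial Γ))
      fun i => (MvPolynomial.aeval_X (fun i => p i) i).symm) F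
  have hp : p ∈ Γ := by
    rw [hS]
    intro F hF
    have hzero : restrictPolynomial Γ F = 0 := Subtype.ext <| funext fun q =>
      (restrictPolynomial_apply F q).trans (hS.subset q.2 F hF)
    rw [← hφ, hzero, map_zero]
  refine ⟨⟨p, hp⟩, AlgHom.ext fun f => ?_⟩
  obtain ⟨F, rfl⟩ := restrictPolynomial_surjective f
  exact (restrictPolynomial_apply F ⟨p, hp⟩).trans (hφ F).symm

theorem IsAlgebraicSet.exists_evalPoint_comp_eq (hΓ : IsAlgebraicSet Γ) {R : Type*} [CommRing R]
    [Algebra ℂ R] {g : R →ₐ[ℂ] regularFunctions Γ} (hg : g.IsIntegral) {ψ : R →ₐ[ℂ] ℂ}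
    (hker : ∀ r, g r = 0 → ψ r = 0) : ∃ p : Γ, (evalPoint p).comp g = ψ := by
  let : Algebra R (regularFunctions Γ) := g.toRingHom.toAlgebra
  have : Algebra.IsIntegral R (regularFunctions Γ) := ⟨hg⟩
  obtain ⟨φ, hφ⟩ := exists_ringHom_comp_algebraMap_eq (A := regularFunctions Γ)
    (ψ := (ψ : R →+* ℂ)) fun r hr =>
      RingHom.mem_ker.mpr (hker r (RingHom.mem_ker.mp hr))
  have hφg : ∀ r, φ (g r) = ψ r := fun r => RingHom.congr_fun hφ r
  obtain ⟨p, hp⟩ := hΓ.exists_evalPoint_eq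
    { φ with commutes' := fun c => by simpa using hφg (algebraMap ℂ R c) }
  exact ⟨p, AlgHom.ext fun r => (DFunLike.congr_fun hp (g r)).trans (hφg r)⟩

theorem IsIrreducibleAlgebraicCurve.le_one_of_injective_of_isIntegral
    (hΓ : IsIrreducibleAlgebraicCurve Γ) {s : ℕ}
    {g : MvPolynomial (Fin s) ℂ →ₐ[ℂ] regularFunctions Γ} (hinj : Function.Injective g)
    (hg : g.IsIntegral) : s ≤ 1 := by
  by_contra! hs
  let i₀ : Fin s := ⟨0, by omega⟩
  let i₁ : Fin s := ⟨1, hs⟩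
  have hpoint : ∀ c : ℂ, ∃ p : Γ, (g (.X i₀)).1 p = 0 ∧ (g (.X i₁)).1 p = c := fun c => by
    obtain ⟨p, hp⟩ := hΓ.1.exists_evalPoint_comp_eq hg
      (ψ := MvPolynomial.aeval fun i => if i = i₁ then c else 0)
      fun r hr => by rw [(map_eq_zero_iff g hinj).mp hr, map_zero]
    have hX : ∀ i, (g (.X i)).1 p = if i = i₁ then c else 0 := fun i =>
      (DFunLike.congr_fun hp (.X i)).trans (MvPolynomial.aeval_X _ i)
    exact ⟨p, by simp [hX, i₀, i₁], by simp [hX]⟩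
  choose point hpoint₀ hpoint₁ using hpoint
  have hpoint_inj : Function.Injective point := fun a b hab => by
    rw [← hpoint₁ a, ← hpoint₁ b, hab]
  have hne : (g (.X i₀)).1 ≠ 0 := fun h =>
    MvPolynomial.X_ne_zero i₀ ((map_eq_zero_iff g hinj).mp (Subtype.ext h))
  exact infinite_range_of_injective hpoint_inj
    ((hΓ.finite_zeros (g (.X i₀)).2 hne).subset (range_subset_iff.mpr hpoint₀))

theorem IsIrreducibleAlgebraicCurve.trdeg_regularFunctions_le_one
    (hΓ : IsIrreducibleAlgebraicCurve Γ) : Algebra.trdeg ℂ (regularFunctions Γ) ≤ 1 := by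
  have := hΓ.isDomain_regularFunctions
  have : Algebra.FiniteType ℂ (regularFunctions Γ) :=
    .of_surjective (restrictPolynomial Γ) restrictPolynomial_surjective
  obtain ⟨s, g, hinj, hg⟩ := exists_integral_inj_algHom_of_fg ℂ (regularFunctions Γ)
  have hs := hΓ.le_one_of_injective_of_isIntegral hinj hg
  let : Algebra (MvPolynomial (Fin s) ℂ) (regularFunctions Γ) := g.toRingHom.toAlgebra
  have : IsScalarTower ℂ (MvPolynomial (Fin s) ℂ) (regularFunctions Γ) :=
    .of_algebraMap_eq' g.comp_algebraMap.symm
  have : FaithfulSMul (MvPolynomial (Fin s) ℂ) (regularFunctions Γ) :=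
    (faithfulSMul_iff_algebraMap_injective _ _).mpr hinj
  have : Algebra.IsIntegral (MvPolynomial (Fin s) ℂ) (regularFunctions Γ) := ⟨hg⟩
  rw [← trdeg_add_eq ℂ (MvPolynomial (Fin s) ℂ), MvPolynomial.trdeg_of_isDomain,
    trdeg_eq_zero, add_zero]
  simpa using hs

theorem IsIrreducibleAlgebraicCurve.exists_aeval_eq_zero (hΓ : IsIrreducibleAlgebraicCurve Γ)
    (f : Fin 2 → regularFunctions Γ) :
    ∃ Q : MvPolynomial (Fin 2) ℂ, Q ≠ 0 ∧ MvPolynomial.aeval f Q = 0 := by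
  by_contra! hindep
  have hf : AlgebraicIndependent ℂ f := algebraicIndependent_iff.mpr fun Q hQ =>
    by_contra fun hne => hindep Q hne hQ
  have hle := hf.cardinalMk_le_trdeg.trans hΓ.trdeg_regularFunctions_le_one
  simp at hle

end RegularFunctions

section JointRoots

variable {σ ι : Type*} {P : ι → Polynomial (MvPolynomial σ ℂ)}

/-- The pairs `(z, y)` such that each `y j` is a root of the polynomial `P j` with its
coefficients evaluated at `z`. For monic `P j` this is a finite branched cover of the `z`-space. -/
def jointRoots (P : ι → Polynomial (MvPolynomial σ ℂ)) :
    Set ((σ → ℂ) × EuclideanSpace ℂ ι) :=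
  {w | ∀ j, ((P j).map (MvPolynomial.eval w.1)).IsRoot (w.2 j)}

theorem isClosed_jointRoots : IsClosed (jointRoots P) := by
  have heq : jointRoots P = ⋂ j, {w : (σ → ℂ) × EuclideanSpace ℂ ι |
      ((P j).map (MvPolynomial.eval w.1)).eval (w.2 j) = 0} := by
    ext w
    simp [jointRoots]
  rw [heq]
  refine isClosed_iInter fun j => isClosed_eq ?_ continuous_const
  exact (continuous_eval_map_eval (P j)).comp
    (f := fun w : (σ → ℂ) × EuclideanSpace ℂ ι => (w.1, w.2 j)) (by fun_prop)

theorem isCompact_jointRoots_inter_preimage_fst (hP : ∀ j, (P j).Monic) {Z : Set (σ → ℂ)}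
    (hZ : IsCompact Z) : IsCompact (jointRoots P ∩ Prod.fst ⁻¹' Z) := by
  choose M hM using fun j => exists_forall_isRoot_norm_le (hP j) hZ
  have hbox : IsCompact (EuclideanSpace.equiv ι ℂ ⁻¹' univ.pi fun j => closedBall 0 (M j)) :=
    (EuclideanSpace.equiv ι ℂ).toHomeomorph.isClosedEmbedding.isCompact_preimage
      (isCompact_univ_pi fun j => isCompact_closedBall 0 (M j))
  have hclosed : IsClosed (jointRoots P ∩ Prod.fst ⁻¹' Z) :=
    isClosed_jointRoots.inter (hZ.isClosed.preimage continuous_fst)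
  exact (hZ.prod hbox).of_isClosed_subset hclosed fun w hw =>
    ⟨hw.2, fun j _ => mem_closedBall_zero_iff.mpr (hM j w.1 hw.2 _ (hw.1 j))⟩

theorem encard_jointRoots_inter_preimage_fst_le [Fintype ι] (hP : ∀ j, (P j).Monic) (z : σ → ℂ) :
    (jointRoots P ∩ Prod.fst ⁻¹' {z}).encard ≤ ∏ j, (P j).natDegree := by
  classical
  let roots : Finset (ι → ℂ) :=
    Fintype.piFinset fun j => ((P j).map (MvPolynomial.eval z)).roots.toFinset
  have hmaps : MapsTo (fun w : (σ → ℂ) × EuclideanSpace ℂ ι => ⇑w.2)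
      (jointRoots P ∩ Prod.fst ⁻¹' {z}) roots := by
    rintro w ⟨hw, rfl⟩
    refine Finset.mem_coe.mpr (Fintype.mem_piFinset.mpr fun j => ?_)
    exact Multiset.mem_toFinset.mpr ((Polynomial.mem_roots ((hP j).map _).ne_zero).mpr (hw j))
  have hinj : InjOn (fun w : (σ → ℂ) × EuclideanSpace ℂ ι => ⇑w.2)
      (jointRoots P ∩ Prod.fst ⁻¹' {z}) := fun w hw w' hw' h =>
    Prod.ext (hw.2.trans hw'.2.symm) (PiLp.ext (congrFun h))
  refine (encard_le_encard_of_injOn hmaps hinj).trans ?_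
  rw [encard_coe_eq_coe_finsetCard, Fintype.card_piFinset]
  refine Nat.cast_le.mpr (Finset.prod_le_prod' fun j _ => ?_)
  rw [← (hP j).natDegree_map (MvPolynomial.eval z)]
  exact (Multiset.toFinset_card_le _).trans (Polynomial.card_roots' _)

end JointRoots

section NoetherNormalization

variable {n : ℕ} {Γ : Set (EuclideanSpace ℂ (Fin n))} {L : EuclideanSpace ℂ (Fin n) →L[ℂ] ℂ}

/-- `L` is a linear Noether normalization of `Γ` uniformly up to infinity: on the cone of pairs
`(τ, τ p)` with `p ∈ Γ`, every coordinate `τ p j` is integral over `ℂ[τ, τ L p]`. The value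
`τ = 1` gives `Γ` itself, while small `τ` control `Γ` near infinity. -/
def IsLinearNoetherNormalization (Γ : Set (EuclideanSpace ℂ (Fin n)))
    (L : EuclideanSpace ℂ (Fin n) →L[ℂ] ℂ) : Prop :=
  ∃ P : Fin n → Polynomial (MvPolynomial (Fin 2) ℂ), (∀ j, (P j).Monic) ∧
    ∀ τ : ℂ, ∀ p ∈ Γ, (![τ, τ * L p], τ • p) ∈ jointRoots P

theorem IsIrreducibleAlgebraicCurve.exists_isLinearNoetherNormalization
    (hΓ : IsIrreducibleAlgebraicCurve Γ) : ∃ L, IsLinearNoetherNormalization Γ L := by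
  obtain ⟨u, hu, hint⟩ := exists_mem_span_isIntegral_adjoin hΓ.exists_aeval_eq_zero
    (coordFunction Γ) Finset.univ
  obtain ⟨c, rfl⟩ := Submodule.mem_span_range_iff_exists_fun ℂ |>.mp hu
  choose P hP hroot using fun j => exists_monic_forall_isRoot_mul (hint j (Finset.mem_univ j))
  refine ⟨∑ i, c i • (EuclideanSpace.proj i : EuclideanSpace ℂ (Fin n) →L[ℂ] ℂ), P, hP,
    fun τ p hp j => ?_⟩
  simpa [coordFunction, evalPoint_apply] using hroot j τ (evalPoint ⟨p, hp⟩)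

/-- The comorphism `ℂ[X] → ℂ[Γ]` of the projection `L : Γ → ℂ`. -/
def linearComorphism (Γ : Set (EuclideanSpace ℂ (Fin n)))
    (L : EuclideanSpace ℂ (Fin n) →L[ℂ] ℂ) : Polynomial ℂ →ₐ[ℂ] regularFunctions Γ :=
  Polynomial.aeval ⟨fun p => L p, linear_mem_regularFunctions L⟩

@[simp]
theorem evalPoint_linearComorphism (Q : Polynomial ℂ) (p : Γ) :
    evalPoint p (linearComorphism Γ L Q) = Q.eval (L p) := by
  rw [linearComorphism, ← Polynomial.aeval_algHom_apply, Polynomial.coe_aeval_eq_eval]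
  rfl

namespace IsLinearNoetherNormalization

theorem exists_encard_fibre_le (hL : IsLinearNoetherNormalization Γ L) :
    ∃ d : ℕ, ∀ x, (Γ ∩ L ⁻¹' {x}).encard ≤ d := by
  obtain ⟨P, hP, hmem⟩ := hL
  refine ⟨∏ j, (P j).natDegree, fun x => ?_⟩
  refine le_trans ?_ (encard_jointRoots_inter_preimage_fst_le hP ![1, x])
  refine encard_le_encard_of_injOn (f := fun p => (![1, x], p)) ?_ fun p _ q _ h =>
    congrArg Prod.snd h
  rintro p ⟨hp, rfl⟩
  exact ⟨by simpa using hmem 1 p hp, rfl⟩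

theorem finite_fibre (hL : IsLinearNoetherNormalization Γ L) (x : ℂ) :
    (Γ ∩ L ⁻¹' {x}).Finite := by
  obtain ⟨d, hd⟩ := hL.exists_encard_fibre_le
  exact finite_of_encard_le_coe (hd x)

theorem exists_isCompact_forall_inv_smul_mem (hL : IsLinearNoetherNormalization Γ L) (B : ℝ) :
    ∃ W : Set ((Fin 2 → ℂ) × EuclideanSpace ℂ (Fin n)), IsCompact W ∧
      (∀ z, (W ∩ Prod.fst ⁻¹' {z}).Finite) ∧
      ∀ R : ℝ, 1 ≤ R → ∀ p ∈ Γ, ‖L p‖ ≤ B * R → (R⁻¹ • ![1, L p], R⁻¹ • p) ∈ W := by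
  obtain ⟨P, hP, hmem⟩ := hL
  refine ⟨_, isCompact_jointRoots_inter_preimage_fst hP (isCompact_closedBall 0 (max 1 B)),
    fun z => (finite_of_encard_le_coe (encard_jointRoots_inter_preimage_fst_le hP z)).subset
      (inter_subset_inter_left _ inter_subset_left), fun R hR p hp hB => ⟨?_, ?_⟩⟩
  · convert hmem (R⁻¹ : ℝ) p hp using 2
    · simp
    · exact (Complex.coe_smul _ p).symm
  · have hR₀ : 0 < R := by linarith
    have hz : ‖(![1, L p] : Fin 2 → ℂ)‖ ≤ R * max 1 B := by
      rw [pi_norm_le_iff_of_nonneg (by positivity), Fin.forall_fin_two]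
      simp only [Matrix.cons_val_zero, Matrix.cons_val_one, norm_one]
      constructor <;> nlinarith [le_max_left 1 B, le_max_right 1 B]
    rw [mem_preimage, mem_closedBall_zero_iff, norm_smul, norm_inv, Real.norm_of_nonneg hR₀.le]
    exact (inv_mul_le_iff₀ hR₀).mpr hz

theorem exists_forall_norm_le (hL : IsLinearNoetherNormalization Γ L) :
    ∃ C, ∀ p ∈ Γ, ‖p‖ ≤ C * (1 + ‖L p‖) := by
  obtain ⟨W, hW, -, hmem⟩ := hL.exists_isCompact_forall_inv_smul_mem 1
  obtain ⟨C, hC⟩ := (hW.image continuous_snd).isBounded.exists_norm_le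
  refine ⟨C, fun p hp => ?_⟩
  have hpos : 0 < 1 + ‖L p‖ := by positivity
  have hnorm := hC _ ⟨_, hmem (1 + ‖L p‖) (by simp) p hp (by simp), rfl⟩
  rwa [norm_smul, norm_inv, Real.norm_of_nonneg hpos.le, inv_mul_le_iff₀ hpos, mul_comm] at hnorm

theorem exists_pos_forall_isPreconnected_dist_le_mul (hL : IsLinearNoetherNormalization Γ L)
    (B : ℝ) {ε : ℝ} (hε : 0 < ε) :
    ∃ η > 0, ∀ R ≥ 1, ∀ C ⊆ Γ, IsPreconnected C → (∀ p ∈ C, ‖L p‖ ≤ B * R) →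
      (∀ p ∈ C, ∀ q ∈ C, dist (L p) (L q) ≤ η * R) → ∀ p ∈ C, ∀ q ∈ C, dist p q ≤ ε * R := by
  obtain ⟨W, hW, hfiber, hmem⟩ := hL.exists_isCompact_forall_inv_smul_mem B
  obtain ⟨η, hη, hlight⟩ := exists_pos_forall_isPreconnected_dist_le hW
    continuous_fst.continuousOn hfiber hε
  refine ⟨η, hη, fun R hR C hCΓ hC hCB hCη p hp q hq => ?_⟩
  have hR₀ : 0 < R := by linarith
  have hdist_inv_smul {V : Type} [SeminormedAddCommGroup V] [NormedSpace ℝ V] (a b : V) (δ : ℝ) :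
      dist (R⁻¹ • a) (R⁻¹ • b) ≤ δ ↔ dist a b ≤ δ * R := by
    rw [dist_smul₀, norm_inv, Real.norm_of_nonneg hR₀.le, inv_mul_le_iff₀ hR₀, mul_comm]
  let rescale : EuclideanSpace ℂ (Fin n) → (Fin 2 → ℂ) × EuclideanSpace ℂ (Fin n) :=
    fun p => (R⁻¹ • ![1, L p], R⁻¹ • p)
  have hcont : Continuous rescale := by fun_prop
  have hdist : dist (rescale p) (rescale q) ≤ ε := by
    refine hlight (rescale '' C) ?_ (hC.image _ hcont.continuousOn) ?_ _ ⟨p, hp, rfl⟩ _ ⟨q, hq, rfl⟩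
    · rintro _ ⟨p, hp, rfl⟩
      exact hmem R hR p (hCΓ hp) (hCB p hp)
    · rintro _ ⟨p, hp, rfl⟩ _ ⟨q, hq, rfl⟩
      rw [hdist_inv_smul, dist_pi_le_iff (by positivity), Fin.forall_fin_two]
      exact ⟨by simpa using by positivity, hCη p hp q hq⟩
  exact (hdist_inv_smul p q ε).mp ((le_max_right _ _).trans hdist)

theorem isProperMap (hL : IsLinearNoetherNormalization Γ L) (hΓ : IsAlgebraicSet Γ) :
    IsProperMap fun p : Γ => L p := by
  have hcont : Continuous fun p : Γ => L p := by fun_prop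
  obtain ⟨C, hC⟩ := hL.exists_forall_norm_le
  refine isProperMap_iff_isCompact_preimage.mpr ⟨hcont, fun K hK => ?_⟩
  obtain ⟨M, hM⟩ := hK.isBounded.exists_norm_le
  refine (hΓ.isClosed.isClosedEmbedding_subtypeVal.isCompact_preimage
    (isCompact_closedBall 0 (|C| * (1 + M)))).of_isClosed_subset (hK.isClosed.preimage hcont)
    fun p hp => mem_closedBall_zero_iff.mpr ((hC p p.2).trans ?_)
  gcongr
  exacts [le_abs_self C, hM _ hp]

theorem injective_linearComorphism (hL : IsLinearNoetherNormalization Γ L) (hΓ : Γ.Infinite) :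
    Function.Injective (linearComorphism Γ L) := by
  refine (injective_iff_map_eq_zero _).mpr fun Q hQ => by_contra fun hne => hΓ ?_
  have hroot : ∀ p ∈ Γ, Q.IsRoot (L p) := fun p hp => by
    rw [Polynomial.IsRoot, ← evalPoint_linearComorphism Q ⟨p, hp⟩, hQ, map_zero]
  refine ((Polynomial.finite_setOfPred_isRoot hne).biUnion fun x _ => hL.finite_fibre x).subset
    fun p hp => ?_
  exact mem_biUnion (hroot p hp) ⟨hp, rfl⟩

theorem isIntegralElem_coordFunction (hL : IsLinearNoetherNormalization Γ L) (j : Fin n) :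
    (linearComorphism Γ L).toRingHom.IsIntegralElem (coordFunction Γ j) := by
  obtain ⟨P, hP, hmem⟩ := hL
  let dehomogenize : MvPolynomial (Fin 2) ℂ →ₐ[ℂ] Polynomial ℂ :=
    MvPolynomial.aeval ![1, Polynomial.X]
  refine ⟨(P j).map dehomogenize.toRingHom, (hP j).map _, Subtype.ext <| funext fun p => ?_⟩
  have hcomp : ((evalPoint p).toRingHom.comp (linearComorphism Γ L).toRingHom).comp
      dehomogenize.toRingHom = MvPolynomial.eval ![1, L p] := by
    refine MvPolynomial.ringHom_ext (fun c => by simp [dehomogenize]) fun i => ?_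
    fin_cases i <;> simp [dehomogenize]
  change (evalPoint p).toRingHom _ = 0
  rw [Polynomial.hom_eval₂, Polynomial.eval₂_map, hcomp]
  simpa [Polynomial.eval_map, evalPoint_apply, coordFunction] using hmem 1 p p.2 j

theorem isIntegral_linearComorphism (hL : IsLinearNoetherNormalization Γ L) :
    (linearComorphism Γ L).IsIntegral := by
  intro f
  obtain ⟨F, rfl⟩ := restrictPolynomial_surjective f
  induction F using MvPolynomial.induction_on with
  | C c =>
    rw [← MvPolynomial.algebraMap_eq, AlgHom.commutes, ← (linearComorphism Γ L).commutes]
    exact (linearComorphism Γ L).toRingHom.isIntegralElem_map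
  | add F G hF hG =>
    rw [map_add]
    exact hF.add _ hG
  | mul_X F i hF =>
    rw [map_mul, restrictPolynomial_X]
    exact hF.mul _ (hL.isIntegralElem_coordFunction i)

end IsLinearNoetherNormalization

theorem exists_mem_regularFunctions_separating {S : Set Γ} (hS : S.Finite) (p : Γ) :
    ∃ f ∈ regularFunctions Γ, f p = 0 ∧ ∀ q ∈ S, f q = 0 → q = p := by
  have : Finite (S \ {p} : Set Γ) := hS.subset sdiff_subset
  obtain ⟨M, hM⟩ := Module.exists_dual_forall_apply_ne_zero (K := ℂ)
    (fun q : (S \ {p} : Set Γ) => q.1.1 - p.1) fun q => sub_ne_zero.mpr fun h =>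
      q.2.2 (Subtype.ext h)
  refine ⟨fun q => M q.1 - M p.1, ?_, sub_self _, fun q hq hzero => by_contra fun hne => ?_⟩
  · exact sub_mem (linear_mem_regularFunctions M.toContinuousLinearMap)
      (algebraMap_mem (regularFunctions Γ) (M p.1))
  · exact hM ⟨q, hq, hne⟩ ((map_sub M _ _).trans hzero)

namespace IsLinearNoetherNormalization

theorem exists_monic_isRoot_iff (hL : IsLinearNoetherNormalization Γ L)
    (hΓ : IsIrreducibleAlgebraicCurve Γ) (f : regularFunctions Γ) :
    ∃ Q : Polynomial (Polynomial ℂ), Q.Monic ∧ ∀ x y,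
      (Q.map (Polynomial.evalRingHom x)).IsRoot y ↔ ∃ p : Γ, L p = x ∧ f.1 p = y := by
  let : Algebra (Polynomial ℂ) (regularFunctions Γ) :=
    (linearComorphism Γ L).toRingHom.toAlgebra
  have : IsDomain (regularFunctions Γ) := hΓ.isDomain_regularFunctions
  have : Module.IsTorsionFree (Polynomial ℂ) (regularFunctions Γ) :=
    Module.isTorsionFree_iff_algebraMap_injective.mpr (hL.injective_linearComorphism hΓ.2.1)
  have hint : IsIntegral (Polynomial ℂ) f := hL.isIntegral_linearComorphism f
  refine ⟨minpoly (Polynomial ℂ) f, minpoly.monic hint, fun x y => ⟨fun hy => ?_, ?_⟩⟩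
  · let g : Polynomial (Polynomial ℂ) →ₐ[ℂ] regularFunctions Γ :=
      Polynomial.aevalTower (linearComorphism Γ L) f
    let ψ : Polynomial (Polynomial ℂ) →ₐ[ℂ] ℂ := Polynomial.aevalTower (Polynomial.aeval x) y
    have hψ (r : Polynomial (Polynomial ℂ)) :
        ψ r = (r.map (Polynomial.evalRingHom x)).eval y := by
      rw [Polynomial.eval_map]
      rfl
    have hg : g.IsIntegral := by
      have hcomp : g.toRingHom.comp Polynomial.C = (linearComorphism Γ L).toRingHom :=
        RingHom.ext fun r => Polynomial.aevalTower_C _ _ r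
      exact .tower_top Polynomial.C g.toRingHom (hcomp ▸ hL.isIntegral_linearComorphism)
    obtain ⟨p, hp⟩ := hΓ.1.exists_evalPoint_comp_eq hg (ψ := ψ) fun r hr => by
      obtain ⟨s, rfl⟩ := (minpoly.isIntegrallyClosed_dvd_iff hint r).mp hr
      rw [map_mul, hψ, hy, zero_mul]
    have hX := DFunLike.congr_fun hp (Polynomial.C Polynomial.X)
    have hf := DFunLike.congr_fun hp Polynomial.X
    exact ⟨p, by simpa [g, ψ] using hX, by simpa [g, ψ, evalPoint_apply] using hf⟩
  · rintro ⟨p, rfl, rfl⟩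
    have hzero := congrArg (evalPoint p).toRingHom (minpoly.aeval (Polynomial ℂ) f)
    rw [Polynomial.aeval_def, Polynomial.hom_eval₂, map_zero] at hzero
    rw [Polynomial.IsRoot, Polynomial.eval_map, ← hzero]
    have hcomp : Polynomial.evalRingHom (L p) = (evalPoint p).toRingHom.comp
        (algebraMap (Polynomial ℂ) (regularFunctions Γ)) :=
      RingHom.ext fun r => (evalPoint_linearComorphism r p).symm
    rw [hcomp]
    rfl

theorem isOpenMap (hL : IsLinearNoetherNormalization Γ L) (hΓ : IsIrreducibleAlgebraicCurve Γ) :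
    IsOpenMap fun p : Γ => L p := by
  refine IsOpenMap.of_nhds_le fun p s hs => ?_
  obtain ⟨U, hUs, hU, hpU⟩ := _root_.mem_nhds_iff.mp (mem_map.mp hs)
  obtain ⟨f, hf, hfp, hsep⟩ := exists_mem_regularFunctions_separating
    ((hL.finite_fibre (L p)).preimage Subtype.val_injective.injOn) p
  have hfcont := continuous_of_mem_regularFunctions hf
  obtain ⟨Q, hQ, hroot⟩ := hL.exists_monic_isRoot_iff hΓ ⟨f, hf⟩
  have hproper : IsProperMap fun q : Γ => (L q, f q) :=
    isProperMap_of_comp_of_t2 (by fun_prop) continuous_fst (hL.isProperMap hΓ.1)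
  have hp : (L p, (0 : ℂ)) ∉ (fun q : Γ => (L q, f q)) '' Uᶜ := by
    rintro ⟨q, hqU, hq⟩
    obtain ⟨hqL, hqf⟩ := Prod.mk.inj hq
    exact hqU (hsep q ⟨q.2, hqL⟩ hqf ▸ hpU)
  obtain ⟨ρ, hρ, hball⟩ := Metric.mem_nhds_iff.mp
    ((hproper.isClosedMap _ hU.isClosed_compl).isOpen_compl.mem_nhds hp)
  have hcont : Continuous fun x => ‖(Q.map (Polynomial.evalRingHom x)).eval 0‖ := by
    simp only [← Polynomial.coeff_zero_eq_eval_zero, Polynomial.coeff_map]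
    exact (Q.coeff 0).continuous.norm
  have hzero : (Q.map (Polynomial.evalRingHom (L p))).eval 0 = 0 := (hroot _ _).mpr ⟨p, rfl, hfp⟩
  have hsmall := hcont.continuousAt.eventually_lt (x₀ := L p)
    (continuousAt_const (y := ρ ^ Q.natDegree)) (by rw [hzero, norm_zero]; positivity)
  filter_upwards [hsmall, ball_mem_nhds _ hρ] with x hx hxp
  obtain ⟨y, hy, hdist⟩ := exists_isRoot_dist_lt (hQ.map (Polynomial.evalRingHom x)) hρ.le
    (by rwa [hQ.natDegree_map])
  obtain ⟨q, rfl, rfl⟩ := (hroot x y).mp hy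
  have hqU : q ∈ U := by
    by_contra hqU
    exact hball (a := (L q, f q)) (mem_ball.mpr (max_lt hxp (by rwa [dist_comm])))
      (mem_image_of_mem _ hqU)
  exact hUs hqU

theorem exists_mem_eq (hL : IsLinearNoetherNormalization Γ L) (hΓ : IsIrreducibleAlgebraicCurve Γ)
    (x : ℂ) : ∃ p ∈ Γ, L p = x := by
  obtain ⟨p, hp⟩ := hΓ.2.1.nonempty
  obtain ⟨q, -, hq⟩ := (image_eq_univ_of_isClopen (hL.isOpenMap hΓ)
    (hL.isProperMap hΓ.1).isClosedMap isClopen_univ ⟨⟨p, hp⟩, mem_univ _⟩).symm.subset (mem_univ x)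
  exact ⟨q, q.2, hq⟩

theorem exists_mem_connectedComponentIn (hL : IsLinearNoetherNormalization Γ L)
    (hΓ : IsIrreducibleAlgebraicCurve Γ) {D : Set ℂ} (hD : IsCompact D) (hconn : IsPreconnected D)
    {p : EuclideanSpace ℂ (Fin n)} (hp : p ∈ Γ) (hpD : L p ∈ D) {x : ℂ} (hx : x ∈ D) :
    ∃ q ∈ connectedComponentIn (Γ ∩ L ⁻¹' D) p, L q = x := by
  obtain ⟨q, hq, hqx⟩ := exists_mem_connectedComponentIn_preimage (hL.isProperMap hΓ.1)
    (hL.isOpenMap hΓ) hD hconn (p := ⟨p, hp⟩) hpD hx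
  set C := connectedComponentIn ((fun p : Γ => L p) ⁻¹' D) ⟨p, hp⟩
  have hC : Subtype.val '' C ⊆ connectedComponentIn (Γ ∩ L ⁻¹' D) p :=
    (isPreconnected_connectedComponentIn.image _ continuous_subtype_val.continuousOn
      ).subset_connectedComponentIn ⟨⟨p, hp⟩, mem_connectedComponentIn hpD, rfl⟩
      (image_subset_iff.mpr fun r hr =>
        ⟨r.2, (connectedComponentIn_subset _ _ hr : r ∈ (fun p : Γ => L p) ⁻¹' D)⟩)
  exact ⟨q, hC (mem_image_of_mem _ hq), hqx⟩

theorem exists_ne_mem_connectedComponentIn (hL : IsLinearNoetherNormalization Γ L)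
    (hΓ : IsIrreducibleAlgebraicCurve Γ) {d : ℕ} (hd : ∀ x, (Γ ∩ L ⁻¹' {x}).encard ≤ d)
    {D : Set ℂ} (hD : IsCompact D) (hconn : IsPreconnected D)
    {p : Fin (d + 1) → EuclideanSpace ℂ (Fin n)} (hp : ∀ i, p i ∈ Γ ∩ L ⁻¹' D) :
    ∃ i j, i ≠ j ∧ p j ∈ connectedComponentIn (Γ ∩ L ⁻¹' D) (p i) := by
  choose q hq hqx using fun i =>
    hL.exists_mem_connectedComponentIn hΓ hD hconn (hp i).1 (hp i).2 (hp 0).2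
  obtain ⟨i, j, hij, hne⟩ : ∃ i j, q i = q j ∧ i ≠ j := by
    by_contra! hinj
    have hcard : ((d + 1 : ℕ) : ℕ∞) ≤ d := by
      calc ((d + 1 : ℕ) : ℕ∞) = (univ : Set (Fin (d + 1))).encard := by simp
        _ ≤ (Γ ∩ L ⁻¹' {L (p 0)}).encard := encard_le_encard_of_injOn
          (fun i _ => ⟨(connectedComponentIn_subset _ _ (hq i)).1, hqx i⟩)
          (fun i _ j _ h => hinj i j h)
        _ ≤ d := hd _
    exact absurd (Nat.cast_le.mp hcard) (by omega)
  refine ⟨i, j, hne, ?_⟩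
  rw [connectedComponentIn_eq (hq i), hij, ← connectedComponentIn_eq (hq j)]
  exact mem_connectedComponentIn (hp j)

theorem hasAtMostSheetsAtInfinity (hL : IsLinearNoetherNormalization Γ L)
    (hΓ : IsIrreducibleAlgebraicCurve Γ) {d : ℕ} (hd : ∀ x, (Γ ∩ L ⁻¹' {x}).encard ≤ d) :
    HasAtMostSheetsAtInfinity Γ d := by
  intro ε hε
  obtain ⟨κ, hκ, hsmall⟩ := hL.exists_pos_forall_isPreconnected_dist_le_mul (‖L‖ + 1) hε
  obtain ⟨η, hη, hηκ⟩ : ∃ η > 0, 2 * (‖L‖ * η) ≤ min κ 1 :=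
    ⟨min κ 1 / (2 * (‖L‖ + 1)), by positivity, by
      rw [← mul_div_assoc, ← mul_div_assoc, div_le_iff₀ (by positivity)]
      nlinarith [lt_min hκ one_pos]⟩
  refine ⟨η, hη, (eventually_ge_atTop 1).mono fun R hR p hp hpR hclose => ?_⟩
  set D := closedBall (L (p 0)) (‖L‖ * η * R)
  have hpD (i) : p i ∈ Γ ∩ L ⁻¹' D := by
    refine ⟨hp i, ?_⟩
    calc dist (L (p i)) (L (p 0)) ≤ ‖L‖ * dist (p i) (p 0) := L.lipschitz.dist_le_mul _ _
      _ ≤ ‖L‖ * η * R := by rw [mul_assoc]; gcongr; exact hclose i 0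
  obtain ⟨i, j, hne, hij⟩ := hL.exists_ne_mem_connectedComponentIn hΓ hd
    (isCompact_closedBall _ _) (convex_closedBall _ _).isPreconnected hpD
  set C := connectedComponentIn (Γ ∩ L ⁻¹' D) (p i)
  have hCsub : C ⊆ Γ ∩ L ⁻¹' D := connectedComponentIn_subset _ _
  have hCi : p i ∈ C := mem_connectedComponentIn (hpD i)
  have hLR : ‖L (p 0)‖ ≤ ‖L‖ * R := L.le_opNorm_of_le (hpR 0)
  have hdiam := hsmall R hR C (fun q hq => (hCsub hq).1) isPreconnected_connectedComponentIn
    (fun q hq => by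
      have hq0 := norm_le_norm_add_norm_sub' (L q) (L (p 0))
      have hqD : ‖L q - L (p 0)‖ ≤ ‖L‖ * η * R := mem_closedBall_iff_norm.mp (hCsub hq).2
      nlinarith [min_le_right κ 1])
    (fun q hq r hr => by
      have hqr := dist_triangle_right (L q) (L r) (L (p 0))
      have hqD : dist (L q) (L (p 0)) ≤ ‖L‖ * η * R := (hCsub hq).2
      have hrD : dist (L r) (L (p 0)) ≤ ‖L‖ * η * R := (hCsub hr).2
      nlinarith [min_le_left κ 1])
  have hCε : C ⊆ Γ ∩ closedBall (p i) (ε * R) := fun q hq => ⟨(hCsub hq).1, hdiam q hq _ hCi⟩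
  exact ⟨i, j, hne,
    isPreconnected_connectedComponentIn.subset_connectedComponentIn hCi hCε hij⟩

end IsLinearNoetherNormalization

end NoetherNormalization

section Shear

variable {n : ℕ} {L : EuclideanSpace ℂ (Fin n) →L[ℂ] ℂ} {v : EuclideanSpace ℂ (Fin n)}
  {Γ : Set (EuclideanSpace ℂ (Fin n))}

theorem IsIrreducibleAlgebraicCurve.isAlgebraicCurve (hΓ : IsIrreducibleAlgebraicCurve Γ) :
    IsAlgebraicCurve Γ :=
  ⟨{Γ}, fun _ hC => Finset.mem_singleton.mp hC ▸ hΓ, by simp⟩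

theorem IsAlgebraicSet.preimage_of_polynomial {k : ℕ} (hΓ : IsAlgebraicSet Γ)
    {Φ : EuclideanSpace ℂ (Fin k) → EuclideanSpace ℂ (Fin n)}
    {G : Fin n → MvPolynomial (Fin k) ℂ}
    (hG : ∀ p i, MvPolynomial.eval (fun j => p j) (G i) = Φ p i) :
    IsAlgebraicSet (Φ ⁻¹' Γ) := by
  classical
  obtain ⟨S, rfl⟩ := hΓ
  refine ⟨S.image (MvPolynomial.bind₁ G), ext fun p => ?_⟩
  simp only [mem_preimage, mem_ofPred_eq, Finset.forall_mem_image, ← MvPolynomial.aeval_eq_eval,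
    MvPolynomial.aeval_bind₁]
  simp only [MvPolynomial.aeval_eq_eval, hG]

/-- The polynomial shear `p ↦ p + c (L p)ᵐ v` of `ℂⁿ` in the direction `v ∈ ker L`. -/
def shear (hv : L v = 0) (m : ℕ) (c : ℂ) :
    EuclideanSpace ℂ (Fin n) ≃ₜ EuclideanSpace ℂ (Fin n) where
  toFun p := p + (c * L p ^ m) • v
  invFun p := p - (c * L p ^ m) • v
  left_inv p := by simp [hv]
  right_inv p := by simp [hv]

theorem shear_apply (hv : L v = 0) (m : ℕ) (c : ℂ) (p : EuclideanSpace ℂ (Fin n)) :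
    shear hv m c p = p + (c * L p ^ m) • v :=
  rfl

theorem shear_symm (hv : L v = 0) (m : ℕ) (c : ℂ) : (shear hv m c).symm = shear hv m (-c) := by
  ext1 p
  change p - (c * L p ^ m) • v = p + (-c * L p ^ m) • v
  module

theorem IsAlgebraicSet.preimage_shear (hΓ : IsAlgebraicSet Γ) (hv : L v = 0) (m : ℕ) (c : ℂ) :
    IsAlgebraicSet (shear hv m c ⁻¹' Γ) := by
  obtain ⟨F, hF⟩ := mem_regularFunctions.mp (linear_mem_regularFunctions (Γ := univ) L)
  refine hΓ.preimage_of_polynomial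
    (G := fun i => MvPolynomial.X i + MvPolynomial.C (c * v i) * F ^ m) fun p i => ?_
  simp only [map_add, map_mul, map_pow, MvPolynomial.eval_X, MvPolynomial.eval_C, shear_apply,
    PiLp.add_apply, PiLp.smul_apply, smul_eq_mul, ← hF ⟨p, mem_univ p⟩]
  ring

theorem IsIrreducibleAlgebraicCurve.preimage_shear (hΓ : IsIrreducibleAlgebraicCurve Γ)
    (hv : L v = 0) (m : ℕ) (c : ℂ) : IsIrreducibleAlgebraicCurve (shear hv m c ⁻¹' Γ) := by
  have hsurj := (shear hv m c).surjective
  refine ⟨hΓ.1.preimage_shear hv m c, hΓ.2.1.preimage fun p _ => hsurj p, fun Y hY hYΓ => ?_⟩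
  have hss : shear hv m (-c) ⁻¹' Y ⊂ Γ := by
    rw [← shear_symm, ← Homeomorph.image_eq_preimage_symm, ← image_preimage_eq Γ hsurj]
    exact (shear hv m c).injective.image_strictMono hYΓ
  have hfin := (hΓ.2.2 _ (hY.preimage_shear hv m (-c)) hss).preimage
    (shear hv m c).injective.injOn
  rwa [← shear_symm, ← preimage_comp, Homeomorph.symm_comp_self, preimage_id] at hfin

end Shear

section ShearedCurve

theorem eventually_mul_one_add_le_mul_pow {m : ℕ} (hm : 1 < m) (a : ℝ) {b : ℝ} (hb : 0 < b) :
    ∀ᶠ σ : ℝ in atTop, a * (1 + σ) ≤ b * σ ^ m := by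
  filter_upwards [eventually_ge_atTop 1, eventually_ge_atTop (2 * |a| / b)] with σ hσ hσa
  calc a * (1 + σ) ≤ |a| * (σ + σ) := by gcongr; exact le_abs_self a
    _ = 2 * |a| * σ := by ring
    _ ≤ b * σ * σ := by rw [div_le_iff₀' hb] at hσa; gcongr
    _ = b * σ ^ 2 := by ring
    _ ≤ b * σ ^ m := by gcongr; assumption

theorem norm_eq_of_pow_eq_pow {z : ℂ} {σ : ℝ} {m : ℕ} (hm : m ≠ 0) (hσ : 0 ≤ σ)
    (h : z ^ m = σ ^ m) : ‖z‖ = σ :=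
  (pow_left_inj₀ (norm_nonneg _) hσ hm).mp (by
    rw [← norm_pow, h, norm_pow, Complex.norm_of_nonneg hσ])

theorem exists_pos_forall_isPreconnected_subsingleton_inter_pow_eq_one {m : ℕ} (hm : m ≠ 0) :
    ∃ δ > 0, ∀ C : Set ℂ, IsPreconnected C → (∀ z ∈ C, ‖z ^ m - 1‖ < δ) →
      (C ∩ {z | z ^ m = 1}).Subsingleton := by
  have hfin : {ω : ℂ | ω ^ m = 1}.Finite :=
    (Polynomial.nthRootsFinset m (1 : ℂ)).finite_toSet.subset fun ω hω =>
      (Polynomial.mem_nthRootsFinset (Nat.pos_of_ne_zero hm) 1).mpr hω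
  obtain ⟨ρ, hρ, hsep⟩ := exists_pos_pairwise_two_mul_le_dist hfin
  refine ⟨ρ ^ m, pow_pos hρ m, fun C hC hclose z hz w hw => by_contra fun hne => ?_⟩
  obtain ⟨ω, -, hball⟩ := exists_subset_ball_of_isPreconnected hsep hC ⟨z, hz.1⟩ fun y hy => by
    obtain ⟨ω, hω, hdist⟩ := exists_pow_eq_one_dist_lt hm hρ.le (hclose y hy)
    exact mem_biUnion hω hdist
  linarith [hsep hz.2 hw.2 hne, dist_triangle_right z w ω, mem_ball.mp (hball hz.1),
    mem_ball.mp (hball hw.1)]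

variable {n : ℕ} {Γ : Set (EuclideanSpace ℂ (Fin n))} {L : EuclideanSpace ℂ (Fin n) →L[ℂ] ℂ}
  {v : EuclideanSpace ℂ (Fin n)} {m : ℕ}

namespace IsLinearNoetherNormalization

theorem exists_forall_norm_sub_smul_le (hL : IsLinearNoetherNormalization Γ L) (hv : L v = 0)
    (m : ℕ) : ∃ C > 0, ∀ a ∈ shear hv m (-1) ⁻¹' Γ, ‖a - L a ^ m • v‖ ≤ C * (1 + ‖L a‖) := by
  obtain ⟨C, hC⟩ := hL.exists_forall_norm_le
  refine ⟨max C 1, by positivity, fun a ha => ?_⟩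
  have hLa : L (shear hv m (-1) a) = L a := by simp [shear_apply, hv]
  have hnorm := hC _ ha
  rw [hLa, shear_apply, neg_one_mul, neg_smul, ← sub_eq_add_neg] at hnorm
  exact hnorm.trans (by gcongr; exact le_max_left _ _)

theorem exists_pos_eventually_dist_pow_lt (hL : IsLinearNoetherNormalization Γ L)
    (hv : L v = 0) (hv₀ : v ≠ 0) (hm : 1 < m) {δ : ℝ} (hδ : 0 < δ) :
    ∃ ε > 0, ∀ᶠ σ : ℝ in atTop, ∀ a ∈ shear hv m (-1) ⁻¹' Γ, ‖L a‖ ≤ σ →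
      ∀ b ∈ shear hv m (-1) ⁻¹' Γ, dist b a ≤ ε * σ ^ m →
        dist (L b ^ m) (L a ^ m) < δ * σ ^ m := by
  obtain ⟨C, hC, hnorm⟩ := hL.exists_forall_norm_sub_smul_le hv m
  have hvpos : 0 < ‖v‖ := norm_pos_iff.mpr hv₀
  obtain ⟨ε, hε, hεδ⟩ : ∃ ε > 0, (2 + C * ‖L‖) * ε < δ * ‖v‖ :=
    exists_pos_mul_lt (by positivity) _
  refine ⟨ε, hε, ?_⟩
  filter_upwards [eventually_gt_atTop 0, eventually_mul_one_add_le_mul_pow hm (2 * C) hε]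
    with σ hσ hlarge a ha haσ b hb hba
  have hLb : ‖L b‖ ≤ σ + ‖L‖ * (ε * σ ^ m) := by
    calc ‖L b‖ ≤ ‖L a‖ + ‖L b - L a‖ := norm_le_norm_add_norm_sub' _ _
      _ ≤ σ + ‖L‖ * (ε * σ ^ m) := by
        rw [← map_sub]
        gcongr
        exact L.le_opNorm_of_le (by rwa [← dist_eq_norm])
  have hdecomp : (L b ^ m - L a ^ m) • v = (b - a) - (b - L b ^ m • v) + (a - L a ^ m • v) := by
    module
  refine lt_of_mul_lt_mul_right ?_ hvpos.le
  calc dist (L b ^ m) (L a ^ m) * ‖v‖ = ‖(L b ^ m - L a ^ m) • v‖ := by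
        rw [norm_smul, dist_eq_norm]
    _ ≤ ‖b - a‖ + ‖b - L b ^ m • v‖ + ‖a - L a ^ m • v‖ := by
        rw [hdecomp]
        exact (norm_add_le _ _).trans (by gcongr; exact norm_sub_le _ _)
    _ ≤ ε * σ ^ m + C * (1 + (σ + ‖L‖ * (ε * σ ^ m))) + C * (1 + σ) := by
        gcongr
        · rwa [← dist_eq_norm]
        · exact (hnorm b hb).trans (by gcongr)
        · exact (hnorm a ha).trans (by gcongr)
    _ = (1 + C * ‖L‖) * ε * σ ^ m + 2 * C * (1 + σ) := by ring
    _ ≤ (2 + C * ‖L‖) * ε * σ ^ m := by linarith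
    _ < δ * σ ^ m * ‖v‖ := by
        rw [mul_right_comm δ]
        gcongr

theorem exists_pos_eventually_forall_mem_connectedComponentIn_eq
    (hL : IsLinearNoetherNormalization Γ L) (hv : L v = 0) (hv₀ : v ≠ 0) (hm : 1 < m) :
    ∃ ε > 0, ∀ᶠ σ : ℝ in atTop, ∀ a ∈ shear hv m (-1) ⁻¹' Γ, L a ^ m = σ ^ m →
      ∀ b ∈ connectedComponentIn (shear hv m (-1) ⁻¹' Γ ∩ closedBall a (ε * σ ^ m)) a,
        L b ^ m = σ ^ m → L b = L a := by
  have hm₀ : m ≠ 0 := by omega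
  obtain ⟨δ, hδ, hsub⟩ := exists_pos_forall_isPreconnected_subsingleton_inter_pow_eq_one hm₀
  obtain ⟨ε, hε, hclose⟩ := hL.exists_pos_eventually_dist_pow_lt hv hv₀ hm hδ
  refine ⟨ε, hε, ?_⟩
  filter_upwards [hclose, eventually_gt_atTop 0] with σ hclose hσ a ha haσ b hb hbσ
  set C := connectedComponentIn (shear hv m (-1) ⁻¹' Γ ∩ closedBall a (ε * σ ^ m)) a
  have hσ₀ : (σ : ℂ) ^ m ≠ 0 := pow_ne_zero _ (Complex.ofReal_ne_zero.mpr hσ.ne')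
  have hroot {c} (hc : L c ^ m = σ ^ m) : (L c / σ) ^ m = 1 := by
    rw [div_pow, hc, div_self hσ₀]
  have haC : a ∈ C := mem_connectedComponentIn ⟨ha, mem_closedBall_self (by positivity)⟩
  have himage : ∀ z ∈ (fun c => L c / σ) '' C, ‖z ^ m - 1‖ < δ := by
    rintro _ ⟨c, hc, rfl⟩
    obtain ⟨hcΓ, hcball⟩ := connectedComponentIn_subset _ _ hc
    have hdist := hclose a ha (norm_eq_of_pow_eq_pow hm₀ hσ.le haσ).le c hcΓ hcball
    rw [div_pow, div_sub_one hσ₀, norm_div, norm_pow, Complex.norm_of_nonneg hσ.le,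
      div_lt_iff₀ (by positivity)]
    rwa [haσ, dist_eq_norm] at hdist
  have heq := hsub _ (isPreconnected_connectedComponentIn.image _ (by fun_prop)) himage
    ⟨mem_image_of_mem _ hb, hroot hbσ⟩ ⟨mem_image_of_mem _ haC, hroot haσ⟩
  exact (div_left_inj' (Complex.ofReal_ne_zero.mpr hσ.ne')).mp heq

theorem eventually_norm_sub_smul_le (hL : IsLinearNoetherNormalization Γ L) (hv : L v = 0)
    (hm : 1 < m) {η : ℝ} (hη : 0 < η) :
    ∀ᶠ σ : ℝ in atTop, ∀ a ∈ shear hv m (-1) ⁻¹' Γ, L a ^ m = σ ^ m →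
      ‖a - (σ : ℂ) ^ m • v‖ ≤ η * σ ^ m := by
  obtain ⟨C, -, hnorm⟩ := hL.exists_forall_norm_sub_smul_le hv m
  filter_upwards [eventually_ge_atTop 0, eventually_mul_one_add_le_mul_pow hm C hη]
    with σ hσ hlarge a ha haσ
  have ha' := hnorm a ha
  rw [haσ, norm_eq_of_pow_eq_pow (by omega) hσ haσ] at ha'
  exact ha'.trans hlarge

theorem exists_mem_preimage_shear_eq (hL : IsLinearNoetherNormalization Γ L)
    (hΓ : IsIrreducibleAlgebraicCurve Γ) (hv : L v = 0) (m : ℕ) (c x : ℂ) :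
    ∃ a ∈ shear hv m c ⁻¹' Γ, L a = x := by
  obtain ⟨q, hq, hqx⟩ := hL.exists_mem_eq hΓ x
  refine ⟨(shear hv m c).symm q, by simpa using hq, ?_⟩
  rw [shear_symm, shear_apply, map_add, map_smul, hv, smul_zero, add_zero, hqx]

theorem exists_injective_pow_eq (hL : IsLinearNoetherNormalization Γ L)
    (hΓ : IsIrreducibleAlgebraicCurve Γ) (hv : L v = 0) (c : ℂ) (hm : m ≠ 0) {σ : ℝ} (hσ : σ ≠ 0) :
    ∃ p : Fin m → EuclideanSpace ℂ (Fin n), (∀ i, p i ∈ shear hv m c ⁻¹' Γ) ∧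
      (∀ i, L (p i) ^ m = σ ^ m) ∧ Function.Injective fun i => L (p i) := by
  have hζ := Complex.isPrimitiveRoot_exp m hm
  set ζ := Complex.exp (2 * Real.pi * Complex.I / m)
  choose p hp hpζ using fun i : Fin m =>
    hL.exists_mem_preimage_shear_eq hΓ hv m c (σ * ζ ^ (i : ℕ))
  refine ⟨p, hp, fun i => ?_, fun i j hij => ?_⟩
  · rw [hpζ, mul_pow, pow_right_comm, hζ.pow_eq_one, one_pow, mul_one]
  · simp only [hpζ, mul_right_inj' (Complex.ofReal_ne_zero.mpr hσ)] at hij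
    exact Fin.ext (hζ.pow_inj i.2 j.2 hij)

theorem not_hasAtMostSheetsAtInfinity_preimage_shear (hL : IsLinearNoetherNormalization Γ L)
    (hΓ : IsIrreducibleAlgebraicCurve Γ) (hv : L v = 0) (hv₀ : v ≠ 0) (hm : 1 < m) {d : ℕ}
    (hd : d < m) : ¬ HasAtMostSheetsAtInfinity (shear hv m (-1) ⁻¹' Γ) d := by
  intro hsheets
  set B := 1 + ‖v‖
  have hB : 0 < B := by positivity
  obtain ⟨ε, hε, hcomp⟩ := hL.exists_pos_eventually_forall_mem_connectedComponentIn_eq hv hv₀ hm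
  obtain ⟨η, hη, hpts⟩ := hsheets (ε / B) (by positivity)
  have htendsto : Tendsto (fun σ : ℝ => B * σ ^ m) atTop atTop :=
    (tendsto_pow_atTop (by omega)).const_mul_atTop hB
  obtain ⟨σ, ⟨hσ, hcomp, hpts⟩, hone, hsmall⟩ :=
    (((eventually_gt_atTop 0).and (hcomp.and (htendsto.eventually hpts))).and
      ((hL.eventually_norm_sub_smul_le hv hm one_pos).and
        (hL.eventually_norm_sub_smul_le hv hm (half_pos (mul_pos hη hB))))).exists
  obtain ⟨q, hq, hqσ, hinj⟩ := hL.exists_injective_pow_eq hΓ hv (-1) (by omega : m ≠ 0) hσ.ne'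
  let p := q ∘ Fin.castLE (Nat.succ_le_of_lt hd)
  have hp (i) : p i ∈ shear hv m (-1) ⁻¹' Γ := hq _
  have hpσ (i) : L (p i) ^ m = σ ^ m := hqσ _
  obtain ⟨i, j, hne, hij⟩ := hpts p hp
    (fun i => by
      calc ‖p i‖ ≤ ‖(σ : ℂ) ^ m • v‖ + ‖p i - (σ : ℂ) ^ m • v‖ := norm_le_norm_add_norm_sub' _ _
        _ ≤ σ ^ m * ‖v‖ + 1 * σ ^ m := by
          rw [norm_smul, norm_pow, Complex.norm_of_nonneg hσ.le]
          gcongr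
          exact hone _ (hp i) (hpσ i)
        _ = B * σ ^ m := by ring)
    (fun i j => by
      have hi := hsmall _ (hp i) (hpσ i)
      have hj := hsmall _ (hp j) (hpσ j)
      rw [← dist_eq_norm] at hi hj
      linarith [dist_triangle_right (p i) (p j) ((σ : ℂ) ^ m • v)])
  rw [← mul_assoc, div_mul_cancel₀ _ hB.ne'] at hij
  exact hne (Fin.castLE_injective _ (hinj (hcomp _ (hp i) (hpσ i) _ hij (hpσ j)).symm))

end IsLinearNoetherNormalization

end ShearedCurve

theorem stmt_7_general (n : ℕ) (hn : 1 < n) (Γ : Set (EuclideanSpace ℂ (Fin n)))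
    (hΓ : IsIrreducibleAlgebraicCurve Γ) :
    ∃ Λ : Set (EuclideanSpace ℂ (Fin n)),
      IsAlgebraicCurve Λ ∧
      (∃ Φ : EuclideanSpace ℂ (Fin n) ≃ₜ EuclideanSpace ℂ (Fin n), ⇑Φ '' Λ = Γ) ∧
      ¬ BiLipschitzEquiv Λ Γ := by
  obtain ⟨L, hL⟩ := hΓ.exists_isLinearNoetherNormalization
  obtain ⟨v, hv, hv₀⟩ := (Submodule.ne_bot_iff _).mp
    (LinearMap.ker_ne_bot_of_finrank_lt (f := L.toLinearMap) (by simpa using hn))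
  obtain ⟨d, hd⟩ := hL.exists_encard_fibre_le
  let Φ := shear (L := L) hv (d + 2) (-1)
  refine ⟨Φ ⁻¹' Γ, (hΓ.preimage_shear hv _ _).isAlgebraicCurve,
    ⟨Φ, image_preimage_eq Γ Φ.surjective⟩, fun hequiv => ?_⟩
  exact hL.not_hasAtMostSheetsAtInfinity_preimage_shear hΓ hv hv₀ (by omega) (by omega)
    (hequiv.hasAtMostSheetsAtInfinity (hL.hasAtMostSheetsAtInfinity hΓ hd))

/-- for `n > 2` and an irreducible algebraic curve `Γ ⊂ ℂⁿ` with a singular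
point, there is an algebraic curve `Λ ⊂ ℂⁿ` ambiently homeomorphic to `Γ` but not
bi-Lipschitz equivalent to `Γ`. -/
theorem stmt_7 (n : ℕ) (hn : 2 < n) (Γ : Set (EuclideanSpace ℂ (Fin n)))
    (hΓ : IsIrreducibleAlgebraicCurve Γ) (hsing : (SingularSet Γ).Nonempty) :
    ∃ Λ : Set (EuclideanSpace ℂ (Fin n)),
      IsAlgebraicCurve Λ ∧
      (∃ Φ : EuclideanSpace ℂ (Fin n) ≃ₜ EuclideanSpace ℂ (Fin n), ⇑Φ '' Λ = Γ) ∧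
      ¬ BiLipschitzEquiv Λ Γ :=
  stmt_7_general n (by omega) Γ hΓ

end
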